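/- Let J denote the Jacobson radical of u. For every 1 ≤ i ≤ n²/2 and j ∈ {0,1}, writing j' := 1−j: (1) P_{2i,j}/J·P_{2i,j} ≅ S_{2i,j}; (2) J·P_{2i,j}/J²·P_{2i,j} ≅ S_{n²−2i+2,j'} ⊕ S_{n²−2i+2,j'}; (3) J²·P_{2i,j} = Soc(P_{2i,j}) and J²·P_{2i,j} ≅ S_{2i,j} as left u-modules. -/

import Mathlib

noncomputable section

open scoped TensorProduct

namespace QFL

/-- The defining relations of the quasi-Frobenius-Lusztig kernel `ũ_q(sl₂)`,
on the free algebra on four generators `K = ι 0`, `K̂ = ι 1`, `E = ι 2`, `F = ι 3`. -/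
inductive Rel (k : Type) [Field k] (n : ℕ) (q : k) :
    FreeAlgebra k (Fin 4) → FreeAlgebra k (Fin 4) → Prop
  | Kord : Rel k n q (FreeAlgebra.ι k (0 : Fin 4) ^ n) 1
  | Khord : Rel k n q (FreeAlgebra.ι k (1 : Fin 4) ^ n)
      ((FreeAlgebra.ι k (0 : Fin 4) ^ (n - 1)) ^ 2)
  | KKh : Rel k n q (FreeAlgebra.ι k (0 : Fin 4) * FreeAlgebra.ι k (1 : Fin 4))
      (FreeAlgebra.ι k (1 : Fin 4) * FreeAlgebra.ι k (0 : Fin 4))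
  | KE : Rel k n q
      (FreeAlgebra.ι k (0 : Fin 4) * FreeAlgebra.ι k (2 : Fin 4) *
        FreeAlgebra.ι k (0 : Fin 4) ^ (n - 1))
      (q ^ n • FreeAlgebra.ι k (2 : Fin 4))
  | KF : Rel k n q
      (FreeAlgebra.ι k (0 : Fin 4) * FreeAlgebra.ι k (3 : Fin 4) *
        FreeAlgebra.ι k (0 : Fin 4) ^ (n - 1))
      ((q ^ n)⁻¹ • FreeAlgebra.ι k (3 : Fin 4))
  | KhE : Rel k n q
      (FreeAlgebra.ι k (1 : Fin 4) * FreeAlgebra.ι k (2 : Fin 4) *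
        FreeAlgebra.ι k (1 : Fin 4) ^ (n ^ 2 - 1))
      ((q ^ n * (q ^ 2)⁻¹) • FreeAlgebra.ι k (2 : Fin 4))
  | KhF : Rel k n q
      (FreeAlgebra.ι k (1 : Fin 4) * FreeAlgebra.ι k (3 : Fin 4) *
        FreeAlgebra.ι k (1 : Fin 4) ^ (n ^ 2 - 1))
      (((q ^ n)⁻¹ * q ^ 2) • FreeAlgebra.ι k (3 : Fin 4))
  | Enil : Rel k n q (FreeAlgebra.ι k (2 : Fin 4) ^ n ^ 2) 0
  | Fnil : Rel k n q (FreeAlgebra.ι k (3 : Fin 4) ^ n ^ 2) 0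
  | EF : Rel k n q
      (FreeAlgebra.ι k (3 : Fin 4) * FreeAlgebra.ι k (2 : Fin 4) -
        q⁻¹ • (FreeAlgebra.ι k (2 : Fin 4) * FreeAlgebra.ι k (3 : Fin 4)))
      (1 - FreeAlgebra.ι k (0 : Fin 4) ^ (n - 1) * FreeAlgebra.ι k (1 : Fin 4))

/-- The algebra `ũ_q(sl₂)` as the quotient of the free algebra by the defining relations. -/
abbrev U (k : Type) [Field k] (n : ℕ) (q : k) := RingQuot (Rel k n q)

variable (k : Type) [Field k] (n : ℕ) (q : k)

def K : U k n q := RingQuot.mkAlgHom k (Rel k n q) (FreeAlgebra.ι k (0 : Fin 4))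
def Kh : U k n q := RingQuot.mkAlgHom k (Rel k n q) (FreeAlgebra.ι k (1 : Fin 4))
def E : U k n q := RingQuot.mkAlgHom k (Rel k n q) (FreeAlgebra.ι k (2 : Fin 4))
def F : U k n q := RingQuot.mkAlgHom k (Rel k n q) (FreeAlgebra.ι k (3 : Fin 4))

/-- `K⁻¹ = K^(n-1)`. -/
def Kinv : U k n q := K k n q ^ (n - 1)
/-- `K̂⁻¹ = K̂^(n²-1)`. -/
def Khinv : U k n q := Kh k n q ^ (n ^ 2 - 1)

/-- `φ_{2i} = (2/n²) Σ_{t<n²/2} q^{-2it} (K⁻¹K̂)^t`. -/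
def phi (i : ℕ) : U k n q :=
  ((n ^ 2 : k)⁻¹ * 2) • ∑ t ∈ Finset.range (n ^ 2 / 2),
    (q⁻¹ ^ (2 * i * t)) • (Kinv k n q * Kh k n q) ^ t

/-- `𝟙₀ = (1/2)(1 + KK̂^(n/2))` and `𝟙₁ = (1/2)(1 - KK̂^(n/2))`. -/
def oneJ (j : ℕ) : U k n q :=
  if j = 0 then (2 : k)⁻¹ • (1 + K k n q * Kh k n q ^ (n / 2))
  else (2 : k)⁻¹ • (1 - K k n q * Kh k n q ^ (n / 2))

/-- The idempotent `e_{2i,j} = φ_{2i} 𝟙_j`. -/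
def eIdem (i j : ℕ) : U k n q := phi k n q i * oneJ k n q j

/-- `α_{2i,j} = F^(n²-1) e_{2i,j}`. -/
def alpha (i j : ℕ) : U k n q := F k n q ^ (n ^ 2 - 1) * eIdem k n q i j

/-- `β_{2i,j} = E^(2i-2) α_{2i,j}`. -/
def beta (i j : ℕ) : U k n q := E k n q ^ (2 * i - 2) * alpha k n q i j

/-- The Gaussian number `s_q = 1 + q + ⋯ + q^(s-1)`. -/
def gauss (x : k) (s : ℕ) : k := ∑ t ∈ Finset.range s, x ^ t

/-- The span of the PBW-type monomials `F^a K^c K̂^d E^b` with `a ≤ n²-2`, `b ≤ n²-1`,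
`c ≤ n-1`, `d ≤ n²-1`. -/
def pbw : Submodule k (U k n q) :=
  Submodule.span k {x | ∃ a b c d : ℕ, a ≤ n ^ 2 - 2 ∧ b ≤ n ^ 2 - 1 ∧ c ≤ n - 1 ∧
    d ≤ n ^ 2 - 1 ∧ x = F k n q ^ a * K k n q ^ c * Kh k n q ^ d * E k n q ^ b}

/-- `γ_{2i,j}`: the unique element of the PBW span with `F·γ = β_{2i,j}`. -/
def gam (i j : ℕ) : U k n q :=
  @dite _ (∃! x, x ∈ pbw k n q ∧ F k n q * x = beta k n q i j)
    (Classical.propDecidable _) (fun h => h.choose) (fun _ => 0)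

/-- The left ideal `P_{2i,j} = u·γ_{2i,j}`. -/
def P (i j : ℕ) : Submodule (U k n q) (U k n q) :=
  Submodule.span (U k n q) {gam k n q i j}

/-- `S_{2i,j} = Soc(P_{2i,j})`, the sum of all simple submodules of `P_{2i,j}`. -/
def S (i j : ℕ) : Submodule (U k n q) (U k n q) :=
  sSup {N : Submodule (U k n q) (U k n q) | N ≤ P k n q i j ∧ IsSimpleModule (U k n q) N}

end QFL

namespace QFL

variable (k : Type) [Field k] (n : ℕ) (q : k)

/-- The product `A·B` of a left ideal `A` and a left ideal `B` of `u`: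
the span of all products `a*b`. -/
def idealMul (A B : Submodule (U k n q) (U k n q)) : Submodule (U k n q) (U k n q) :=
  Submodule.span (U k n q) {x | ∃ a ∈ A, ∃ b ∈ B, x = a * b}

/-- The Jacobson radical of `u`. -/
def jrad : Submodule (U k n q) (U k n q) := (⊥ : Ideal (U k n q)).jacobson

end QFL

namespace QFLx
set_option linter.unusedSectionVars false
open Polynomial

variable {k : Type} [Field k] {A : Type} [Ring A] [Algebra k A]

/-- The coefficient in `F E^s v = p^s E^s F v + cf E^(s-1) v` for `L v = p^(e+1) v`. -/
def cf (p : k) (e s : ℕ) : k := (1 - p ^ s) * (1 - p ^ (e + s)) / (1 - p)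

lemma cf_succ (p : k) (hp : p ≠ 1) (e s : ℕ) :
    cf p e (s + 1) = p * cf p e s + (1 - p ^ (e + 1 + 2 * s)) := by
  have h1 : (1 - p) ≠ 0 := sub_ne_zero.2 (Ne.symm hp)
  unfold cf
  field_simp
  ring

lemma cf_zero (p : k) (e : ℕ) : cf p e 0 = 0 := by simp [cf]

lemma cf_eq_zero {N : ℕ} {p : k} (hp : IsPrimitiveRoot p N) (e s : ℕ) (h : N ∣ e + s) :
    cf p e s = 0 := by
  simp [cf, (hp.pow_eq_one_iff_dvd _).2 h]

lemma cf_ne_zero {N : ℕ} {p : k} (hp : IsPrimitiveRoot p N) (hN : 1 < N) (e s : ℕ)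
    (h : ¬ N ∣ e + s) (h2 : ¬ N ∣ s) : cf p e s ≠ 0 := by
  have h1 : (1 - p) ≠ 0 := sub_ne_zero.2 (Ne.symm (hp.ne_one hN))
  unfold cf
  refine div_ne_zero (mul_ne_zero ?_ ?_) h1
  · rw [sub_ne_zero]; intro h3; exact h2 ((hp.pow_eq_one_iff_dvd _).1 h3.symm)
  · rw [sub_ne_zero]; intro h3; exact h ((hp.pow_eq_one_iff_dvd _).1 h3.symm)

/-- The relations in terms of `L = K⁻¹K̂` and `T = K K̂^(n/2)`, with `p = q⁻¹`. -/
structure Rels (N : ℕ) (p : k) (E F L T : A) : Prop where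
  prim : IsPrimitiveRoot p N
  pos : 0 < N
  four : 4 ∣ N
  LN : L ^ (N / 2) = 1
  TT : T * T = 1
  LT : L * T = T * L
  LE : L * E = p ^ 2 • (E * L)
  FL : F * L = p ^ 2 • (L * F)
  TE : T * E = -(E * T)
  TF : T * F = -(F * T)
  EN : E ^ N = 0
  FE : F * E = p • (E * F) + 1 - L

variable {N : ℕ} {p : k} {E F L T : A}

lemma Rels.one_lt (h : Rels N p E F L T) : 1 < N := by
  have := Nat.le_of_dvd h.pos h.four; omega

lemma Rels.even (h : Rels N p E F L T) : 2 ∣ N := dvd_trans (by norm_num) h.four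

lemma Rels.pne (h : Rels N p E F L T) : p ≠ 1 := h.prim.ne_one h.one_lt

lemma Rels.p0 (h : Rels N p E F L T) : p ≠ 0 := h.prim.ne_zero h.pos.ne'

section module
variable {M : Type} [AddCommGroup M] [Module k M] [Module A M] [IsScalarTower k A M]

lemma Rels.Lpow (h : Rels N p E F L T) (v : M) (c : k) (hv : L • v = c • v) (s : ℕ) :
    L • (E ^ s • v) = (c * p ^ (2 * s)) • (E ^ s • v) := by
  induction s with
  | zero => simpa using hv
  | succ s ih =>
    rw [pow_succ', mul_smul, ← mul_smul L, h.LE, smul_assoc, mul_smul, ih, smul_comm E, smul_smul]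
    congr 1
    ring

lemma Rels.Tpow (h : Rels N p E F L T) (v : M) (c : k) (hv : T • v = c • v) (s : ℕ) :
    T • (E ^ s • v) = ((-1) ^ s * c) • (E ^ s • v) := by
  induction s with
  | zero => simpa using hv
  | succ s ih =>
    rw [pow_succ', mul_smul, ← mul_smul T, h.TE, neg_smul, mul_smul, ih, smul_comm E, ← neg_smul]
    congr 1
    ring

lemma Rels.FEpow (h : Rels N p E F L T) (v : M) (e : ℕ) (hv : L • v = p ^ (e + 1) • v) (s : ℕ) :
    F • (E ^ (s + 1) • v) = p ^ (s + 1) • (E ^ (s + 1) • (F • v)) + cf p e (s + 1) • (E ^ s • v) := by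
  induction s with
  | zero =>
    rw [cf_succ p h.pne, cf_zero]
    simp only [zero_add, pow_one, pow_zero, one_smul]
    rw [← mul_smul, h.FE, sub_smul, add_smul, smul_assoc, mul_smul, one_smul, hv, mul_zero, zero_add,
      sub_smul, one_smul]
    simp only [mul_zero, add_zero]
    abel
  | succ s ih =>
    rw [pow_succ' E (s + 1), mul_smul, ← mul_smul F, h.FE, sub_smul, add_smul, smul_assoc, mul_smul,
      one_smul, ih, h.Lpow v _ hv, cf_succ p h.pne e (s + 1), smul_add, smul_comm E (p ^ (s + 1)),
      smul_comm E (cf p e (s + 1)), ← mul_smul E, ← mul_smul E, ← pow_succ', ← pow_succ']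
    generalize E ^ (s + 1 + 1) • F • v = X1
    generalize E ^ (s + 1) • v = X2
    match_scalars
    · ring
    · ring

lemma Rels.FEpow0 (h : Rels N p E F L T) (v : M) (e : ℕ) (hv : L • v = p ^ (e + 1) • v)
    (hF : F • v = 0) (s : ℕ) :
    F • (E ^ (s + 1) • v) = cf p e (s + 1) • (E ^ s • v) := by
  rw [h.FEpow v e hv, hF]; simp

lemma Rels.FsE0 (h : Rels N p E F L T) (v : M) (e : ℕ) (hv : L • v = p ^ (e + 1) • v)
    (hF : F • v = 0) (s r : ℕ) (hr : s < r) :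
    F ^ r • (E ^ s • v) = 0 := by
  induction s generalizing r with
  | zero =>
    obtain ⟨r, rfl⟩ : ∃ r', r = r' + 1 := ⟨r - 1, by omega⟩
    rw [pow_succ, mul_smul, pow_zero, one_smul, hF, smul_zero]
  | succ s ih =>
    obtain ⟨r, rfl⟩ : ∃ r', r = r' + 1 := ⟨r - 1, by omega⟩
    rw [pow_succ, mul_smul, h.FEpow0 v e hv hF, smul_comm, ih r (by omega), smul_zero]

/-- Lowest weight descent: `F^r E^(s+r) v = C E^s v` with `C ≠ 0`. -/
lemma Rels.FrE (h : Rels N p E F L T) (v : M) (e : ℕ) (hv : L • v = p ^ (e + 1) • v)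
    (hF : F • v = 0) (s r : ℕ) (hc : ∀ t, s < t → t ≤ s + r → cf p e t ≠ 0) :
    ∃ C : k, C ≠ 0 ∧ F ^ r • (E ^ (s + r) • v) = C • (E ^ s • v) := by
  induction r with
  | zero => exact ⟨1, one_ne_zero, by simp⟩
  | succ r ih =>
    obtain ⟨C, hC, hCe⟩ := ih (fun t h1 h2 => hc t h1 (by omega))
    refine ⟨cf p e (s + r + 1) * C, mul_ne_zero (hc _ (by omega) (by omega)) hC, ?_⟩
    rw [pow_succ, mul_smul, ← add_assoc, h.FEpow0 v e hv hF, smul_comm, hCe, smul_smul]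

lemma Rels.Epow_ge (h : Rels N p E F L T) (v : M) (s : ℕ) (hs : N ≤ s) : E ^ s • v = 0 := by
  obtain ⟨t, rfl⟩ := Nat.exists_eq_add_of_le hs
  rw [pow_add, h.EN, zero_mul, zero_smul]

/-- `F^(r+1) E` commutation. -/
lemma Rels.FrEcomm (h : Rels N p E F L T) (r : ℕ) : ∃ x y : k,
    (1 - p) * x = 1 - p ^ (r + 1) ∧ (1 - p⁻¹) * y = 1 - p⁻¹ ^ (r + 1) ∧
    F ^ (r + 1) * E = p ^ (r + 1) • (E * F ^ (r + 1)) + F ^ r * (x • (1:A) - y • L) := by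
  have hp0 := h.p0
  have hLF : L * F = p⁻¹ ^ 2 • (F * L) := by
    rw [h.FL, smul_smul]; field_simp; simp
  induction r with
  | zero => exact ⟨1, 1, by simp, by simp, by simp [h.FE, add_sub_assoc]⟩
  | succ r ih =>
    obtain ⟨x, y, hx, hy, hxy⟩ := ih
    refine ⟨p * x + 1, p⁻¹ * y + 1, ?_, ?_, ?_⟩
    · linear_combination p * hx
    · linear_combination p⁻¹ * hy
    · have : F ^ (r + 1 + 1) * E = p • (F ^ (r + 1) * E * F) + F ^ (r + 1) - F ^ (r + 1) * L := by
        rw [pow_succ, mul_assoc (F ^ (r + 1)) F E, h.FE]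
        simp only [mul_sub, mul_add, mul_smul_comm, mul_one, mul_assoc]
      have h3 : F ^ r * (L * F) = p⁻¹ ^ 2 • (F ^ (r + 1) * L) := by
        rw [hLF, mul_smul_comm, ← mul_assoc, pow_succ F]
      have h4 : F ^ r * (x • (1:A) - y • L) * F = x • F ^ (r + 1) - (y * p⁻¹ ^ 2) • (F ^ (r + 1) * L) := by
        rw [mul_assoc, sub_mul, smul_mul_assoc, smul_mul_assoc, one_mul, mul_sub, mul_smul_comm,
          mul_smul_comm, h3, smul_smul, pow_succ F]
      rw [this, hxy, add_mul, h4, smul_mul_assoc, mul_assoc E, ← pow_succ, mul_sub, mul_smul_comm,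
        mul_smul_comm, mul_one]
      match_scalars
      · ring
      · ring
      · field_simp
        ring

lemma Rels.FNcomm (h : Rels N p E F L T) : F ^ N * E = E * F ^ N := by
  obtain ⟨m, rfl⟩ : ∃ m, N = m + 1 := ⟨N - 1, by have := h.pos; omega⟩
  obtain ⟨x, y, hx, hy, hxy⟩ := h.FrEcomm m
  have h1 : (1 - p) ≠ 0 := sub_ne_zero.2 (Ne.symm h.pne)
  have h2 : (1 - p⁻¹) ≠ 0 := sub_ne_zero.2 (Ne.symm (by simpa using h.pne))
  rw [h.prim.pow_eq_one, sub_self] at hx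
  rw [inv_pow, h.prim.pow_eq_one, inv_one, sub_self] at hy
  have hx0 := (mul_eq_zero.1 hx).resolve_left h1
  have hy0 := (mul_eq_zero.1 hy).resolve_left h2
  rw [hxy, hx0, hy0, h.prim.pow_eq_one]; simp
end module
end QFLx

namespace QFLx
set_option linter.unusedSectionVars false
open Polynomial
variable {k : Type} [Field k] {A : Type} [Ring A] [Algebra k A]
variable {N : ℕ} {p : k} {E F L T : A}

section module
variable {M : Type} [AddCommGroup M] [Module k M] [Module A M] [IsScalarTower k A M]

lemma aeval_X_pow_mul (r : k[X]) (m : ℕ) (v : M) :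
    aeval E (r * X ^ m) • v = aeval E r • (E ^ m • v) := by
  rw [map_mul, mul_smul]; simp

lemma Epow_aeval (r : k[X]) (m : ℕ) (v : M) :
    E ^ m • (aeval E r • v) = aeval E r • (E ^ m • v) := by
  rw [← aeval_X_pow_mul, ← mul_smul, mul_comm r, map_mul]; simp

lemma aeval_mono_smul (c : k) (m : ℕ) (v : M) :
    aeval E (monomial m c) • v = c • (E ^ m • v) := by
  rw [aeval_monomial, mul_smul, algebraMap_smul]

lemma Rels.Fpoly (h : Rels N p E F L T) (v : M) (e : ℕ) (hv : L • v = p ^ (e + 1) • v)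
    (hF : F • v = 0) (r : k[X]) : ∃ r' : k[X], F • (aeval E r • v) = aeval E r' • v := by
  induction r using Polynomial.induction_on' with
  | add r s hr hs =>
    obtain ⟨r', hr⟩ := hr
    obtain ⟨s', hs⟩ := hs
    exact ⟨r' + s', by rw [map_add, map_add, add_smul, add_smul, smul_add, hr, hs]⟩
  | monomial m c =>
    cases m with
    | zero => exact ⟨0, by rw [aeval_mono_smul, smul_comm]; simp [hF]⟩
    | succ m =>
      refine ⟨monomial m (c * cf p e (m + 1)), ?_⟩
      rw [aeval_mono_smul, aeval_mono_smul, smul_comm, h.FEpow0 v e hv hF, smul_smul]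

lemma Rels.Frpoly (h : Rels N p E F L T) (v : M) (e : ℕ) (hv : L • v = p ^ (e + 1) • v)
    (hF : F • v = 0) (r : k[X]) (m : ℕ) :
    ∃ r' : k[X], F ^ m • (aeval E r • v) = aeval E r' • v := by
  induction m with
  | zero => exact ⟨r, by simp⟩
  | succ m ih =>
    obtain ⟨r', hr'⟩ := ih
    obtain ⟨r'', hr''⟩ := h.Fpoly v e hv hF r'
    exact ⟨r'', by rw [pow_succ', mul_smul, hr', hr'']⟩

lemma Rels.Lpoly (h : Rels N p E F L T) (v : M) (c : k) (hv : L • v = c • v)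
    (r : k[X]) : ∃ r' : k[X], L • (aeval E r • v) = aeval E r' • v := by
  induction r using Polynomial.induction_on' with
  | add r s hr hs =>
    obtain ⟨r', hr⟩ := hr
    obtain ⟨s', hs⟩ := hs
    exact ⟨r' + s', by rw [map_add, map_add, add_smul, add_smul, smul_add, hr, hs]⟩
  | monomial m b =>
    refine ⟨monomial m (b * (c * p ^ (2 * m))), ?_⟩
    rw [aeval_mono_smul, aeval_mono_smul, smul_comm, h.Lpow v c hv, smul_smul]

lemma Rels.Tpoly (h : Rels N p E F L T) (v : M) (c : k) (hv : T • v = c • v)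
    (r : k[X]) : ∃ r' : k[X], T • (aeval E r • v) = aeval E r' • v := by
  induction r using Polynomial.induction_on' with
  | add r s hr hs =>
    obtain ⟨r', hr⟩ := hr
    obtain ⟨s', hs⟩ := hs
    exact ⟨r' + s', by rw [map_add, map_add, add_smul, add_smul, smul_add, hr, hs]⟩
  | monomial m b =>
    refine ⟨monomial m (b * ((-1) ^ m * c)), ?_⟩
    rw [aeval_mono_smul, aeval_mono_smul, smul_comm, h.Tpow v c hv, smul_smul]

/-- `A` is generated by `E, F, L, T`. -/
def Gen (k : Type) [Field k] {A : Type} [Ring A] [Algebra k A] (E F L T : A) : Prop :=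
  ∀ S : Subalgebra k A, E ∈ S → F ∈ S → L ∈ S → T ∈ S → S = ⊤

lemma Rels.genpoly (h : Rels N p E F L T) (g : Gen k E F L T) (v : M) (e : ℕ) (τ : k)
    (hv : L • v = p ^ (e + 1) • v)
    (hF : F • v = 0) (hT : T • v = τ • v) (a : A) :
    ∃ r' : k[X], a • v = aeval E r' • v := by
  let S : Subalgebra k A :=
    { carrier := {a | ∀ r : k[X], ∃ r' : k[X], a • (aeval E r • v) = aeval E r' • v}
      mul_mem' := by
        intro a b ha hb r
        obtain ⟨r1, h1⟩ := hb r
        obtain ⟨r2, h2⟩ := ha r1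
        exact ⟨r2, by rw [mul_smul, h1, h2]⟩
      add_mem' := by
        intro a b ha hb r
        obtain ⟨r1, h1⟩ := hb r
        obtain ⟨r2, h2⟩ := ha r
        exact ⟨r2 + r1, by rw [add_smul, h1, h2, map_add, add_smul]⟩
      algebraMap_mem' := by
        intro c r
        exact ⟨C c * r, by rw [map_mul, mul_smul, aeval_C]⟩ }
  have hS : S = ⊤ := g S
    (fun r => ⟨r * X, by
      have := Epow_aeval (E := E) r 1 v
      rw [← aeval_X_pow_mul] at this; simpa using this⟩)
    (fun r => h.Fpoly v e hv hF r) (fun r => h.Lpoly v _ hv r) (fun r => h.Tpoly v _ hT r)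
  have ha : a ∈ S := hS ▸ Algebra.mem_top
  obtain ⟨r', hr'⟩ := ha 1
  exact ⟨r', by simpa using hr'⟩

end module

/-- The action of any element on a lowest weight vector, uniformly in the module. -/
lemma Rels.LW (h : Rels N p E F L T) (g : Gen k E F L T) (e : ℕ) (τ : k) (a : A) :
    ∃ r : k[X], ∀ {M : Type} [AddCommGroup M] [Module k M] [Module A M] [IsScalarTower k A M]
      (N' : Submodule A M) (v : M), F • v ∈ N' → L • v - p ^ (e + 1) • v ∈ N' →
      T • v - τ • v ∈ N' → a • v - aeval E r • v ∈ N' := by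
  let I0 : Submodule A A := Submodule.span A {F, L - p ^ (e + 1) • (1 : A), T - τ • (1 : A)}
  let v0 : A ⧸ I0 := Submodule.Quotient.mk 1
  have key : ∀ b : A, b • v0 = Submodule.Quotient.mk b := fun b => by
    rw [← Submodule.Quotient.mk_smul, smul_eq_mul, mul_one]
  have hF : F • v0 = 0 := by
    rw [key, Submodule.Quotient.mk_eq_zero]; exact Submodule.subset_span (by simp)
  have hL : L • v0 = p ^ (e + 1) • v0 := by
    rw [key, ← Submodule.Quotient.mk_smul, Submodule.Quotient.eq]
    exact Submodule.subset_span (by simp)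
  have hT : T • v0 = τ • v0 := by
    rw [key, ← Submodule.Quotient.mk_smul, Submodule.Quotient.eq]
    exact Submodule.subset_span (by simp)
  obtain ⟨r, hr⟩ := h.genpoly g v0 e τ hL hF hT a
  refine ⟨r, ?_⟩
  rw [key, key, Submodule.Quotient.eq] at hr
  intro M _ _ _ _ N' v h1 h2 h3
  have hle : I0 ≤ N'.comap (LinearMap.toSpanSingleton A M v) := by
    refine Submodule.span_le.2 ?_
    rintro x (rfl | rfl | rfl)
    · simpa using h1
    · simpa [sub_smul] using h2
    · simpa [sub_smul] using h3
  simpa [sub_smul] using hle hr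

section module
variable {M : Type} [AddCommGroup M] [Module k M] [Module A M] [IsScalarTower k A M]

/-- The configuration of the two vectors `α, γ` generating a projective. -/
structure Pair (N : ℕ) (p : k) (E F L T : A) (d : ℕ) (τ : k) (α γ : M) : Prop where
  rels : Rels N p E F L T
  dpos : 0 < d
  dlt : d < N
  dodd : d % 2 = 1
  tau : τ ≠ 0
  two : (2 : k) ≠ 0
  Fα : F • α = 0
  Lα : L • α = p ^ (N - d + 1) • α
  Tα : T • α = (-τ) • α
  Fγ : F • γ = E ^ (d - 1) • α
  Lγ : L • γ = p ^ (d + 1) • γ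
  Tγ : T • γ = τ • γ
  ne : E ^ (N - 1) • α ≠ 0

variable {d : ℕ} {τ : k} {α γ : M}

lemma not_dvd_of {N x : ℕ} (h1 : 0 < x) (h2 : x < N) : ¬ N ∣ x := Nat.not_dvd_of_pos_of_lt h1 h2

lemma Pair.Fγs (h : Pair N p E F L T d τ α γ) (s : ℕ) :
    F • (E ^ (s + 1) • γ) = p ^ (s + 1) • (E ^ (s + d) • α) + cf p d (s + 1) • (E ^ s • γ) := by
  rw [h.rels.FEpow γ d h.Lγ, h.Fγ, ← mul_smul (E ^ (s + 1)), ← pow_add]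
  have := h.dpos
  rw [show s + 1 + (d - 1) = s + d by omega]

lemma Pair.cfα (h : Pair N p E F L T d τ α γ) (t : ℕ) (h1 : 0 < t) (h2 : t < N) (h3 : t ≠ d) :
    cf p (N - d) t ≠ 0 := by
  have := h.dlt
  refine cf_ne_zero h.rels.prim h.rels.one_lt _ _ ?_ (not_dvd_of h1 h2)
  rintro ⟨c, hc⟩
  rcases c with _ | _ | c
  · omega
  · omega
  · have : N * (c + 1 + 1) = N * c + 2 * N := by ring
    have : 0 ≤ N * c := Nat.zero_le _
    omega

lemma Pair.cfγ (h : Pair N p E F L T d τ α γ) (t : ℕ) (h1 : 0 < t) (h2 : t < N) (h3 : t ≠ N - d) :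
    cf p d t ≠ 0 := by
  have := h.dlt
  have := h.dpos
  refine cf_ne_zero h.rels.prim h.rels.one_lt _ _ ?_ (not_dvd_of h1 h2)
  rintro ⟨c, hc⟩
  rcases c with _ | _ | c
  · omega
  · omega
  · have : N * (c + 1 + 1) = N * c + 2 * N := by ring
    have : 0 ≤ N * c := Nat.zero_le _
    omega

lemma Pair.top_aux (h : Pair N p E F L T d τ α γ) (r : ℕ) (hr : r < d) :
    ∃ C : k, C ≠ 0 ∧ F ^ r • (E ^ (N - 1) • γ) = C • (E ^ (N - 1 - r) • γ) := by
  have h1 := h.dlt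
  induction r with
  | zero => exact ⟨1, one_ne_zero, by simp⟩
  | succ r ih =>
    obtain ⟨C, hC, e⟩ := ih (by omega)
    obtain ⟨s, hs⟩ : ∃ s, N - 1 - r = s + 1 := ⟨N - 1 - r - 1, by omega⟩
    refine ⟨C * cf p d (s + 1), mul_ne_zero hC (h.cfγ _ (by omega) (by omega) (by omega)), ?_⟩
    rw [pow_succ', mul_smul, e, smul_comm, hs, h.Fγs, h.rels.Epow_ge α (s + d) (by omega),
      smul_zero, zero_add, smul_smul, show N - 1 - (r + 1) = s by omega]

lemma Pair.top (h : Pair N p E F L T d τ α γ) :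
    ∃ C : k, C ≠ 0 ∧ F ^ d • (E ^ (N - 1) • γ) = C • (E ^ (N - 1) • α) := by
  have h1 := h.dlt
  have h2 := h.dpos
  obtain ⟨C, hC, e⟩ := h.top_aux (d - 1) (by omega)
  obtain ⟨s, hs⟩ : ∃ s, N - 1 - (d - 1) = s + 1 := ⟨N - 1 - (d - 1) - 1, by omega⟩
  refine ⟨C * p ^ (s + 1), mul_ne_zero hC (pow_ne_zero _ h.rels.p0), ?_⟩
  obtain ⟨d', hd'⟩ : ∃ d', d = d' + 1 := ⟨d - 1, by omega⟩
  have e2 : F ^ d • (E ^ (N - 1) • γ) = F • (F ^ (d - 1) • (E ^ (N - 1) • γ)) := by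
    rw [← mul_smul F, ← pow_succ', show d - 1 + 1 = d by omega]
  rw [e2, e, smul_comm, hs, h.Fγs, cf_eq_zero h.rels.prim d (s + 1) ⟨1, by omega⟩, zero_smul,
    add_zero, smul_smul, show s + d = N - 1 by omega]

lemma Pair.Eγne (h : Pair N p E F L T d τ α γ) : E ^ (N - 1) • γ ≠ 0 := by
  intro h0
  obtain ⟨C, hC, e⟩ := h.top
  rw [h0, smul_zero] at e
  exact (smul_ne_zero hC h.ne) e.symm

lemma Pair.αdown (h : Pair N p E F L T d τ α γ) (s : ℕ) (hs : d ≤ s) (hs2 : s < N) :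
    ∃ C : k, C ≠ 0 ∧ F ^ (N - 1 - s) • (E ^ (N - 1) • α) = C • (E ^ s • α) := by
  have h2 := h.dpos
  obtain ⟨C, hC, e⟩ := h.rels.FrE α (N - d) h.Lα h.Fα s (N - 1 - s)
    (fun t _ _ => h.cfα t (by omega) (by omega) (by omega))
  rw [show s + (N - 1 - s) = N - 1 by omega] at e
  exact ⟨C, hC, e⟩

lemma Pair.αlow (h : Pair N p E F L T d τ α γ) :
    ∃ C : k, C ≠ 0 ∧ F ^ (d - 1) • (E ^ (d - 1) • α) = C • α := by
  have h1 := h.dlt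
  obtain ⟨C, hC, e⟩ := h.rels.FrE α (N - d) h.Lα h.Fα 0 (d - 1)
    (fun t _ _ => h.cfα t (by omega) (by omega) (by omega))
  exact ⟨C, hC, by simpa using e⟩

lemma Pair.FEd (h : Pair N p E F L T d τ α γ) : F • (E ^ d • α) = 0 := by
  have h1 := h.dlt
  have h2 := h.dpos
  obtain ⟨d', hd'⟩ : ∃ d', d = d' + 1 := ⟨d - 1, by omega⟩
  have := h.rels.FEpow0 α (N - d) h.Lα h.Fα d'
  rw [← hd'] at this
  rw [this, cf_eq_zero h.rels.prim (N - d) d ⟨1, by omega⟩, zero_smul]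

lemma pow_eq_of_dvd {p : k} (hp : IsPrimitiveRoot p N) (a b : ℕ) (h : a = b + N) : p ^ a = p ^ b := by
  rw [h, pow_add, hp.pow_eq_one, mul_one]

lemma Pair.LEd (h : Pair N p E F L T d τ α γ) : L • (E ^ d • α) = p ^ (d + 1) • (E ^ d • α) := by
  have h1 := h.dlt
  rw [h.rels.Lpow α _ h.Lα, ← pow_add, pow_eq_of_dvd h.rels.prim _ (d + 1) (by omega)]

lemma odd_neg_one {R : Type} [Ring R] {d : ℕ} (h : d % 2 = 1) : (-1 : R) ^ d = -1 :=
  Odd.neg_one_pow (Nat.odd_iff.2 h)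

lemma Pair.TEd (h : Pair N p E F L T d τ α γ) : T • (E ^ d • α) = τ • (E ^ d • α) := by
  rw [h.rels.Tpow α _ h.Tα, odd_neg_one h.dodd]; simp

lemma Pair.N1odd (h : Pair N p E F L T d τ α γ) : (N - 1) % 2 = 1 := by
  have := h.rels.even
  have := h.rels.pos
  omega

/-- Linear independence. -/
lemma Pair.indep (h : Pair N p E F L T d τ α γ) (r s : k[X])
    (e : aeval E r • α + aeval E s • γ = 0) : X ^ N ∣ r ∧ X ^ N ∣ s := by
  have key : ∀ m, m ≤ N → X ^ m ∣ r ∧ X ^ m ∣ s := by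
    intro m
    induction m with
    | zero => simp
    | succ m ih =>
      intro hm
      obtain ⟨⟨r', hr⟩, ⟨s', hs⟩⟩ := ih (by omega)
      have red : ∀ (u : k[X]) (v : M), E ^ (N - 1 - m) • (aeval E (X ^ m * u) • v) =
          u.coeff 0 • (E ^ (N - 1) • v) := by
        intro u v
        rw [Epow_aeval, mul_comm, aeval_X_pow_mul, ← mul_smul (E ^ m), ← pow_add,
          show m + (N - 1 - m) = N - 1 by omega]
        conv_lhs => rw [← divX_mul_X_add u]
        rw [map_add, add_smul, aeval_C, algebraMap_smul, map_mul, mul_smul, aeval_X, ← mul_smul E,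
          ← pow_succ', h.rels.Epow_ge _ _ (by omega), smul_zero, zero_add]
      have e1 := congrArg (fun x => E ^ (N - 1 - m) • x) e
      simp only [smul_add, smul_zero, hr, hs, red] at e1
      have e2 := congrArg (fun x => T • x) e1
      simp only [smul_add, smul_zero] at e2
      rw [smul_comm T (r'.coeff 0), smul_comm T (s'.coeff 0), h.rels.Tpow α _ h.Tα, h.rels.Tpow γ _ h.Tγ,
        odd_neg_one h.N1odd] at e2
      have e3 : (2 * τ * r'.coeff 0) • (E ^ (N - 1) • α) = 0 := by
        have : (2 * τ * r'.coeff 0) • (E ^ (N - 1) • α) =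
          (r'.coeff 0 • (-1 * -τ) • E ^ (N - 1) • α + s'.coeff 0 • (-1 * τ) • E ^ (N - 1) • γ)
          + τ • (r'.coeff 0 • E ^ (N - 1) • α + s'.coeff 0 • E ^ (N - 1) • γ) := by
          generalize E ^ (N - 1) • α = x
          generalize E ^ (N - 1) • γ = y
          module
        rw [this, e1, e2, smul_zero, add_zero]
      have c1 : r'.coeff 0 = 0 := by
        rcases smul_eq_zero.1 e3 with e4 | e4
        · have := h.tau
          have := h.two
          simpa [this, h.tau] using e4
        · exact absurd e4 h.ne
      rw [c1, zero_smul, zero_add] at e1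
      have c2 : s'.coeff 0 = 0 := (smul_eq_zero.1 e1).resolve_right h.Eγne
      rw [hr, hs, pow_succ]
      exact ⟨mul_dvd_mul_left _ (X_dvd_iff.2 c1), mul_dvd_mul_left _ (X_dvd_iff.2 c2)⟩
  exact key N le_rfl

lemma Rels.aeval_zero (h : Rels N p E F L T) (r : k[X]) (hr : X ^ N ∣ r) : aeval E r = 0 := by
  obtain ⟨s, rfl⟩ := hr
  rw [map_mul, map_pow, aeval_X, h.EN, zero_mul]

lemma Pair.FE_ne (h : Pair N p E F L T d τ α γ) : F ^ (N - 1) • (E ^ (N - 1) • γ) ≠ 0 := by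
  have h1 := h.dlt
  obtain ⟨C, hC, e⟩ := h.top
  obtain ⟨C', hC', e'⟩ := h.αdown d le_rfl h1
  rw [show N - 1 = (N - 1 - d) + d by omega, pow_add F, mul_smul,
    show (N - 1 - d) + d = N - 1 by omega, e, smul_comm, e', smul_smul]
  refine smul_ne_zero (mul_ne_zero hC hC') ?_
  intro h0
  apply h.ne
  rw [show N - 1 = (N - 1 - d) + d by omega, pow_add, mul_smul, h0, smul_zero]

lemma Pair.low_aux (h : Pair N p E F L T d τ α γ) (r s : ℕ) (hrs : s + r < N - d) :
    ∃ C : k, C ≠ 0 ∧ ∃ u : k[X],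
      F ^ r • (E ^ (s + r) • γ) = C • (E ^ s • γ) + aeval E u • (E ^ d • α) := by
  induction r with
  | zero => exact ⟨1, one_ne_zero, 0, by simp⟩
  | succ r ih =>
    obtain ⟨C, hC, u, e⟩ := ih (by omega)
    have hc := h.cfγ (s + r + 1) (by omega) (by omega) (by omega)
    obtain ⟨u', hu'⟩ := h.rels.Frpoly (E ^ d • α) d h.LEd h.FEd (X ^ (s + r)) r
    refine ⟨cf p d (s + r + 1) * C, mul_ne_zero hc hC,
      Polynomial.C (cf p d (s + r + 1)) * u + Polynomial.C (p ^ (s + r + 1)) * u', ?_⟩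
    rw [map_pow, aeval_X, ← mul_smul (E ^ (s + r)), ← pow_add] at hu'
    rw [pow_succ, mul_smul, ← add_assoc, h.Fγs, smul_add, smul_comm _ (cf _ _ _), e,
      smul_comm _ (p ^ _), hu', map_add, map_mul, map_mul, aeval_C, aeval_C, add_smul,
      mul_smul _ (aeval E u), mul_smul _ (aeval E u'), algebraMap_smul, algebraMap_smul, smul_add,
      mul_smul (cf p d (s + r + 1)) C]
    abel

lemma Pair.low (h : Pair N p E F L T d τ α γ) :
    ∃ C : k, C ≠ 0 ∧ ∃ u : k[X],
      F ^ (N - 1) • (E ^ (N - 1 - d) • γ) = C • α + aeval E u • (E ^ d • α) := by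
  have h1 := h.dlt
  have h2 := h.dpos
  obtain ⟨C, hC, u, e⟩ := h.low_aux (N - 1 - d) 0 (by omega)
  obtain ⟨C', hC', e'⟩ := h.αlow
  obtain ⟨u', hu'⟩ := h.rels.Frpoly (E ^ d • α) d h.LEd h.FEd u d
  refine ⟨C * C', mul_ne_zero hC hC', u', ?_⟩
  rw [zero_add, pow_zero, one_smul] at e
  have e3 : F ^ d • γ = C' • α := by
    rw [show d = d - 1 + 1 by omega, pow_succ, mul_smul, h.Fγ, e']
  rw [show N - 1 = d + (N - 1 - d) by omega, pow_add, mul_smul,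
    show d + (N - 1 - d) - d = N - 1 - d by omega, e, smul_add, hu', smul_comm, e3, smul_smul]

lemma Pair.EF_ne (h : Pair N p E F L T d τ α γ) :
    E ^ (N - 1) • (F ^ (N - 1) • (E ^ (N - 1 - d) • γ)) ≠ 0 := by
  have h2 := h.dpos
  obtain ⟨C, hC, u, e⟩ := h.low
  rw [e, smul_add, Epow_aeval, ← mul_smul (E ^ (N - 1)), ← pow_add,
    h.rels.Epow_ge α (N - 1 + d) (by omega), smul_zero, add_zero, smul_comm]
  exact smul_ne_zero hC h.ne

end module
end QFLx

namespace QFLx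
set_option linter.unusedSectionVars false
open Polynomial
variable {k : Type} [Field k] {A : Type} [Ring A] [Algebra k A]
variable {N : ℕ} {p : k} {E F L T : A}

/-- Unnormalised weight projector for `L`. -/
def pr (N : ℕ) (p : k) (L : A) (i : ℕ) : A :=
  ∑ t ∈ Finset.range (N / 2), p ^ (2 * i * t) • L ^ t

/-- Unnormalised weight projector for `T`. -/
def pt (σ : k) (T : A) : A := 1 + σ • T

lemma Rels.FLpow (h : Rels N p E F L T) (t : ℕ) : F * L ^ t = p ^ (2 * t) • (L ^ t * F) := by
  induction t with
  | zero => simp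
  | succ t ih =>
    rw [pow_succ', ← mul_assoc, h.FL, smul_mul_assoc, mul_assoc, ih, mul_smul_comm, smul_smul,
      mul_assoc, ← pow_add]
    congr 2; ring

lemma Rels.F_pr (h : Rels N p E F L T) (i : ℕ) : F * pr N p L i = pr N p L (i + 1) * F := by
  unfold pr
  rw [Finset.mul_sum, Finset.sum_mul]
  refine Finset.sum_congr rfl fun t _ => ?_
  rw [mul_smul_comm, h.FLpow, smul_smul, smul_mul_assoc, ← pow_add]
  congr 2; ring

lemma Rels.F_pt (h : Rels N p E F L T) (σ : k) : F * pt σ T = pt (-σ) T * F := by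
  unfold pt
  rw [mul_add, add_mul, mul_smul_comm, smul_mul_assoc, h.TF]; simp

lemma Rels.Frpr (h : Rels N p E F L T) (i r : ℕ) : F ^ r * pr N p L i = pr N p L (i + r) * F ^ r := by
  induction r with
  | zero => simp
  | succ r ih => rw [pow_succ', mul_assoc, ih, ← mul_assoc, h.F_pr, mul_assoc, add_assoc]

lemma Rels.Frpt (h : Rels N p E F L T) (σ : k) (r : ℕ) :
    F ^ r * pt σ T = pt ((-1) ^ r * σ) T * F ^ r := by
  induction r with
  | zero => simp
  | succ r ih =>
    rw [pow_succ', mul_assoc, ih, ← mul_assoc, h.F_pt, mul_assoc, pow_succ']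
    congr 3; ring

lemma Rels.L_pr (h : Rels N p E F L T) (i : ℕ) : p ^ (2 * i) • (L * pr N p L i) = pr N p L i := by
  unfold pr
  have e : ∀ t, p ^ (2 * i) • (L * (p ^ (2 * i * t) • L ^ t)) = p ^ (2 * i * (t + 1)) • L ^ (t + 1) := by
    intro t
    rw [mul_smul_comm, smul_smul, ← pow_add, ← pow_succ']
    congr 2; ring
  rw [Finset.mul_sum, Finset.smul_sum]
  simp only [e]
  have h1 := Finset.sum_range_succ' (fun t => p ^ (2 * i * t) • L ^ t) (N / 2)
  have h2 := Finset.sum_range_succ (fun t => p ^ (2 * i * t) • L ^ t) (N / 2)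
  rw [h1] at h2
  have h3 : p ^ (2 * i * (N / 2)) • L ^ (N / 2) = p ^ (2 * i * 0) • L ^ 0 := by
    rw [h.LN, show 2 * i * (N / 2) = N * i by
      obtain ⟨c, hc⟩ := h.even
      rw [hc, Nat.mul_div_cancel_left _ (by norm_num)]; ring, pow_mul, h.prim.pow_eq_one]
    simp
  rw [h3] at h2
  exact add_right_cancel h2

lemma Rels.L_pr' (h : Rels N p E F L T) (i j : ℕ) (hij : N ∣ j + 2 * i) :
    L * pr N p L i = p ^ j • pr N p L i := by
  conv_rhs => rw [← h.L_pr i]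
  rw [smul_smul, ← pow_add, (h.prim.pow_eq_one_iff_dvd _).2 hij, one_smul]

lemma Rels.T_pt (h : Rels N p E F L T) (σ : k) (hσ : σ * σ = 1) : T * pt σ T = σ • pt σ T := by
  unfold pt
  rw [mul_add, mul_one, mul_smul_comm, h.TT, smul_add, smul_smul, hσ, one_smul, add_comm]

lemma Rels.L_pt (h : Rels N p E F L T) (σ : k) : L * pt σ T = pt σ T * L := by
  unfold pt
  rw [mul_add, add_mul, mul_one, one_mul, mul_smul_comm, smul_mul_assoc, h.LT]

lemma Rels.T_pr (h : Rels N p E F L T) (i : ℕ) : T * pr N p L i = pr N p L i * T := by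
  unfold pr
  rw [Finset.mul_sum, Finset.sum_mul]
  refine Finset.sum_congr rfl fun t _ => ?_
  rw [mul_smul_comm, smul_mul_assoc]
  congr 1
  exact ((show Commute L T from h.LT).symm.pow_right t)

lemma Rels.pr_pt (h : Rels N p E F L T) (i : ℕ) (σ : k) :
    pr N p L i * pt σ T = pt σ T * pr N p L i := by
  unfold pt
  rw [mul_add, add_mul, mul_one, one_mul, mul_smul_comm, smul_mul_assoc, h.T_pr]

lemma Rels.sum_pr (h : Rels N p E F L T) :
    ∑ i ∈ Finset.range (N / 2), pr N p L i = ((N / 2 : ℕ) : k) • (1 : A) := by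
  unfold pr
  have h4 := Nat.le_of_dvd h.pos h.four
  rw [Finset.sum_comm, Finset.sum_eq_single_of_mem 0 (Finset.mem_range.2 (by omega))]
  · simp [← Nat.cast_smul_eq_nsmul k]
  · intro t ht ht0
    rw [Finset.mem_range] at ht
    rw [← Finset.sum_smul]
    have : ∑ i ∈ Finset.range (N / 2), p ^ (2 * i * t) = 0 := by
      have h1 : (p ^ (2 * t) - 1) * ∑ i ∈ Finset.range (N / 2), (p ^ (2 * t)) ^ i = 0 := by
        rw [mul_geom_sum, ← pow_mul, show 2 * t * (N / 2) = N * t by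
          obtain ⟨c, hc⟩ := h.even
          rw [hc, Nat.mul_div_cancel_left _ (by norm_num)]; ring, pow_mul, h.prim.pow_eq_one]
        simp
      have h2 : p ^ (2 * t) - 1 ≠ 0 := by
        rw [sub_ne_zero]
        intro h3
        exact not_dvd_of (by omega) (by omega) ((h.prim.pow_eq_one_iff_dvd _).1 h3)
      have h3 := (mul_eq_zero.1 h1).resolve_left h2
      rw [← h3]
      refine Finset.sum_congr rfl fun i _ => ?_
      rw [← pow_mul]; congr 1; ring
    rw [this, zero_smul]

section module
variable {M : Type} [AddCommGroup M] [Module k M] [Module A M] [IsScalarTower k A M]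

lemma Rels.exwt [CharZero k] (h : Rels N p E F L T) (x : M) (hx : x ≠ 0) :
    ∃ i < N / 2, ∃ σ : k, σ * σ = 1 ∧ (pt σ T * pr N p L i) • x ≠ 0 := by
  by_contra hcon
  push Not at hcon
  have h4 := Nat.le_of_dvd h.pos h.four
  have h1 : ∀ i < N / 2, pr N p L i • x = 0 := by
    intro i hi
    have e1 := hcon i hi 1 (by ring)
    have e2 := hcon i hi (-1) (by ring)
    have e3 : (2 : k) • (pr N p L i • x) = 0 := by
      have : (2 : k) • (pr N p L i • x) =
          (pt (1 : k) T * pr N p L i) • x + (pt (-1 : k) T * pr N p L i) • x := by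
        simp only [pt, mul_smul]
        generalize pr N p L i • x = y
        rw [add_smul, add_smul, smul_assoc, smul_assoc, one_smul A y]
        generalize T • y = z
        module
      rw [this, e1, e2, add_zero]
    exact (smul_eq_zero.1 e3).resolve_left two_ne_zero
  have h2 : (∑ i ∈ Finset.range (N / 2), pr N p L i) • x = 0 := by
    rw [Finset.sum_smul]
    exact Finset.sum_eq_zero fun i hi => h1 i (Finset.mem_range.1 hi)
  rw [h.sum_pr, smul_assoc, one_smul] at h2
  rcases smul_eq_zero.1 h2 with h3 | h3
  · rw [Nat.cast_eq_zero] at h3; omega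
  · exact hx h3

/-- In a nonzero module there is a lowest weight vector. -/
lemma Rels.exLW [CharZero k] (h : Rels N p E F L T) (hFN : F ^ N = 0) (x : M) (hx : x ≠ 0) :
    ∃ (e : ℕ) (σ : k) (v : M), e % 2 = 1 ∧ e < N ∧ v ≠ 0 ∧ F • v = 0 ∧ L • v = p ^ (e + 1) • v ∧
      T • v = σ • v := by
  classical
  have hex : ∃ t, F ^ t • x = 0 := ⟨N, by rw [hFN, zero_smul]⟩
  have hs := Nat.find_spec hex
  have h0 : Nat.find hex ≠ 0 := by
    intro h0
    rw [h0, pow_zero, one_smul] at hs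
    exact hx hs
  obtain ⟨t, ht⟩ := Nat.exists_eq_succ_of_ne_zero h0
  have hmin := Nat.find_min hex (m := t) (by omega)
  rw [ht, Nat.succ_eq_add_one, pow_succ', mul_smul] at hs
  obtain ⟨i, hi, σ, hσ, hne⟩ := h.exwt (F ^ t • x) hmin
  have hev := h.even
  refine ⟨N - 2 * i - 1, σ, _, by omega, by have := h.pos; omega, hne, ?_, ?_, ?_⟩
  · rw [← mul_smul, ← mul_assoc, h.F_pt, mul_assoc, h.F_pr, ← mul_assoc, mul_smul, hs, smul_zero]
  · rw [← mul_smul, ← mul_assoc, h.L_pt, mul_assoc, h.L_pr' i (N - 2 * i - 1 + 1) ⟨1, by omega⟩,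
      mul_smul_comm, smul_assoc]
  · rw [← mul_smul, ← mul_assoc, h.T_pt σ hσ, smul_mul_assoc, smul_assoc]

lemma Rels.simple_kill [CharZero k] (h : Rels N p E F L T) (g : Gen k E F L T) (hFN : F ^ N = 0)
    [IsSimpleModule A M] (x : M) : E ^ (N - 1) • x = 0 ∧ F ^ (N - 1) • x = 0 := by
  haveI := IsSimpleModule.nontrivial A M
  obtain ⟨y, hy⟩ := exists_ne (0 : M)
  obtain ⟨e, σ, v, he, heN, hv, hF, hL, hT⟩ := h.exLW hFN y hy
  have hev := h.even
  have surj := fun w (hw : w ≠ 0) => IsSimpleModule.toSpanSingleton_surjective A (m := (w : M)) hw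
  -- the vector E^(N-e) v vanishes
  have hE : E ^ (N - e) • v = 0 := by
    by_contra hne
    have hF' : F • (E ^ (N - e) • v) = 0 := by
      obtain ⟨s, hs⟩ : ∃ s, N - e = s + 1 := ⟨N - e - 1, by omega⟩
      rw [hs, h.FEpow0 v e hL hF, cf_eq_zero h.prim e (s + 1) ⟨1, by omega⟩, zero_smul]
    have hL' : L • (E ^ (N - e) • v) = p ^ (e + 2 * (N - e) + 1) • (E ^ (N - e) • v) := by
      rw [h.Lpow v _ hL, ← pow_add]
      congr 2; omega
    obtain ⟨a, ha⟩ := surj _ hne v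
    obtain ⟨r, hr⟩ := h.genpoly g (E ^ (N - e) • v) (e + 2 * (N - e))
      ((-1) ^ (N - e) * σ) hL' hF' (h.Tpow v _ hT _) a
    rw [LinearMap.toSpanSingleton_apply, hr] at ha
    -- v = r(E) E^(N-e) v, iterate
    have iter : ∀ m : ℕ, ∃ r' : k[X], v = aeval E r' • (E ^ m • v) := by
      intro m
      induction m with
      | zero => exact ⟨1, by simp⟩
      | succ m ih =>
        obtain ⟨r', hr'⟩ := ih
        refine ⟨r' * r * X ^ (N - e - 1), ?_⟩
        rw [aeval_X_pow_mul, map_mul, mul_smul, ← mul_smul (E ^ (N - e - 1)), ← pow_add,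
          show N - e - 1 + (m + 1) = m + (N - e) by omega, pow_add, mul_smul, ← Epow_aeval, ha]
        exact hr'
    obtain ⟨r', hr'⟩ := iter N
    rw [h.EN, zero_smul, smul_zero] at hr'
    exact hv hr'
  obtain ⟨a, rfl⟩ := surj _ hv x
  obtain ⟨r, hr⟩ := h.genpoly g v e σ hL hF hT a
  rw [LinearMap.toSpanSingleton_apply, hr]
  have hlow : ∀ s, N - e ≤ s → E ^ s • v = 0 := by
    intro s hs
    rw [show s = s - (N - e) + (N - e) by omega, pow_add, mul_smul, hE, smul_zero]
  constructor
  · rw [Epow_aeval, hlow _ (by omega), smul_zero]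
  · clear hr
    induction r using Polynomial.induction_on' with
    | add r s hr hs => rw [map_add, add_smul, smul_add, hr, hs, add_zero]
    | monomial m c =>
      rw [aeval_mono_smul, smul_comm]
      by_cases hm : N - e ≤ m
      · rw [hlow m hm]; simp
      · rw [h.FsE0 v e hL hF m (N - 1) (by omega), smul_zero]

end module

lemma Rels.mem_jac [CharZero k] (h : Rels N p E F L T) (g : Gen k E F L T) (hFN : F ^ N = 0) :
    E ^ (N - 1) ∈ Ring.jacobson A ∧ F ^ (N - 1) ∈ Ring.jacobson A := by
  have key : ∀ I : Ideal A, I.IsMaximal → E ^ (N - 1) ∈ I ∧ F ^ (N - 1) ∈ I := by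
    intro I hI
    have : IsSimpleModule A (A ⧸ I) := isSimpleModule_iff_isCoatom.2 (Ideal.isMaximal_def.1 hI)
    have := h.simple_kill g hFN (M := A ⧸ I) (Submodule.Quotient.mk 1)
    rw [← Submodule.Quotient.mk_smul, ← Submodule.Quotient.mk_smul, smul_eq_mul, smul_eq_mul, mul_one,
      mul_one, Submodule.Quotient.mk_eq_zero, Submodule.Quotient.mk_eq_zero] at this
    exact this
  rw [Ring.jacobson_eq_sInf_isMaximal, Submodule.mem_sInf, Submodule.mem_sInf]
  exact ⟨fun I hI => (key I hI).1, fun I hI => (key I hI).2⟩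

end QFLx

namespace QFLx
set_option linter.unusedSectionVars false
open Polynomial
variable {k : Type} [Field k] {A : Type} [Ring A] [Algebra k A]
variable {N : ℕ} {p : k} {E F L T : A}

/-- Factoring a surjection through another. -/
lemma lift_aux {X R B : Type} [AddCommGroup X] [AddCommGroup R] [AddCommGroup B] [Module A X]
    [Module A R] [Module A B] (π : X →ₗ[A] R) (ψ : X →ₗ[A] B) (hπ : Function.Surjective π)
    (hψ : Function.Surjective ψ) (N' : Submodule A R) (h : ∀ a, π a ∈ N' ↔ ψ a = 0) :
    ∃ g : R →ₗ[A] B, Function.Surjective g ∧ LinearMap.ker g = N' := by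
  let e := (LinearMap.quotKerEquivOfSurjective π hπ).symm
  have hk : LinearMap.ker π ≤ LinearMap.ker ψ := by
    intro x hx
    rw [LinearMap.mem_ker] at hx ⊢
    rw [← h, hx]; exact N'.zero_mem
  let g : R →ₗ[A] B := (Submodule.liftQ (LinearMap.ker π) ψ hk).comp e.toLinearMap
  have hg : ∀ x, g (π x) = ψ x := by
    intro x
    have : e (π x) = Submodule.Quotient.mk x := by
      rw [LinearEquiv.symm_apply_eq]; rfl
    show (Submodule.liftQ (LinearMap.ker π) ψ hk) (e (π x)) = _
    rw [this]; rfl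
  refine ⟨g, ?_, ?_⟩
  · intro b
    obtain ⟨x, rfl⟩ := hψ b
    exact ⟨π x, hg x⟩
  · ext y
    obtain ⟨x, rfl⟩ := hπ y
    rw [LinearMap.mem_ker, hg, h]

lemma X_pow_dvd_cancel {a b c : ℕ} (h : a + b = c) (r : k[X]) : X ^ c ∣ r * X ^ b ↔ X ^ a ∣ r := by
  rw [← h, pow_add]
  exact mul_dvd_mul_iff_right (pow_ne_zero _ X_ne_zero)

section module
variable {M : Type} [AddCommGroup M] [Module k M] [Module A M] [IsScalarTower k A M]
variable {d : ℕ} {τ : k} {α γ : M}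

lemma smem (a : A) (v : M) : a • v ∈ Submodule.span A {v} :=
  Submodule.smul_mem _ _ (Submodule.mem_span_singleton_self v)

lemma mem_of_csmul {W : Submodule A M} {c : k} (hc : c ≠ 0) {v : M} (h : c • v ∈ W) : v ∈ W := by
  have : v = (c⁻¹ • (1 : A)) • (c • v) := by
    rw [smul_assoc, one_smul, smul_smul, inv_mul_cancel₀ hc, one_smul]
  rw [this]; exact W.smul_mem _ h

lemma csmul_mem {W : Submodule A M} (c : k) {v : M} (h : v ∈ W) : c • v ∈ W := by
  have : c • v = (c • (1 : A)) • v := by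
    rw [smul_assoc, one_smul]
  rw [this]; exact W.smul_mem _ h

/-- The middle submodule. -/
def Rm (A : Type) [Ring A] {M : Type} [AddCommGroup M] [Module A M] (N d : ℕ) (E : A) (α γ : M) :
    Submodule A M :=
  Submodule.span A {α} ⊔ Submodule.span A {E ^ (N - d) • γ}

lemma Pair.mem_Sg (h : Pair N p E F L T d τ α γ) (g : Gen k E F L T) {x : M}
    (hx : x ∈ Submodule.span A {E ^ d • α}) : ∃ r : k[X], x = aeval E (r * X ^ d) • α := by
  obtain ⟨a, rfl⟩ := Submodule.mem_span_singleton.1 hx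
  obtain ⟨r, hr⟩ := h.rels.genpoly g (E ^ d • α) d τ h.LEd h.FEd h.TEd a
  exact ⟨r, by rw [hr, aeval_X_pow_mul]⟩

lemma Pair.mem_α (h : Pair N p E F L T d τ α γ) (g : Gen k E F L T) {x : M}
    (hx : x ∈ Submodule.span A {α}) : ∃ r : k[X], x = aeval E r • α := by
  obtain ⟨a, rfl⟩ := Submodule.mem_span_singleton.1 hx
  exact h.rels.genpoly g α (N - d) (-τ) h.Lα h.Fα h.Tα a

lemma Pair.Sg_le_α (h : Pair N p E F L T d τ α γ) :
    Submodule.span A {E ^ d • α} ≤ Submodule.span A {α} := by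
  rw [Submodule.span_singleton_le_iff_mem]; exact smem _ _

lemma Pair.Sg_le_R (h : Pair N p E F L T d τ α γ) :
    Submodule.span A {E ^ d • α} ≤ Rm A N d E α γ := h.Sg_le_α.trans le_sup_left

lemma Pair.α_mem (h : Pair N p E F L T d τ α γ) : α ∈ Submodule.span A {γ} := by
  obtain ⟨C, hC, e⟩ := h.αlow
  apply mem_of_csmul hC
  rw [← e, ← h.Fγ, ← mul_smul]
  exact smem _ _

lemma Pair.R_le (h : Pair N p E F L T d τ α γ) : Rm A N d E α γ ≤ Submodule.span A {γ} := by
  unfold Rm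
  rw [sup_le_iff, Submodule.span_singleton_le_iff_mem, Submodule.span_singleton_le_iff_mem]
  exact ⟨h.α_mem, smem _ _⟩

lemma Pair.Sg_le (h : Pair N p E F L T d τ α γ) :
    Submodule.span A {E ^ d • α} ≤ Submodule.span A {γ} := h.Sg_le_R.trans h.R_le

lemma Pair.mem_P (h : Pair N p E F L T d τ α γ) (g : Gen k E F L T) {x : M}
    (hx : x ∈ Submodule.span A {γ}) : ∃ r s : k[X], x = aeval E r • α + aeval E s • γ := by
  obtain ⟨a, rfl⟩ := Submodule.mem_span_singleton.1 hx
  obtain ⟨s, hs⟩ := h.rels.LW g d τ a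
  have h1 := hs (Submodule.span A {α}) γ (by rw [h.Fγ]; exact smem _ _)
    (by rw [h.Lγ, sub_self]; exact Submodule.zero_mem _)
    (by rw [h.Tγ, sub_self]; exact Submodule.zero_mem _)
  obtain ⟨r, hr⟩ := h.mem_α g h1
  exact ⟨r, s, by rw [← hr]; abel⟩

lemma Pair.FEγ (h : Pair N p E F L T d τ α γ) :
    F • (E ^ (N - d) • γ) ∈ Submodule.span A {E ^ d • α} := by
  have h1 := h.dlt
  obtain ⟨s, hs⟩ : ∃ s, N - d = s + 1 := ⟨N - d - 1, by omega⟩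
  rw [hs, h.Fγs, cf_eq_zero h.rels.prim d (s + 1) ⟨1, by omega⟩, zero_smul, add_zero, pow_add E,
    mul_smul]
  exact csmul_mem _ (smem _ _)

lemma Pair.LEγ (h : Pair N p E F L T d τ α γ) :
    L • (E ^ (N - d) • γ) = p ^ (N - d + 1) • (E ^ (N - d) • γ) := by
  have h1 := h.dlt
  rw [h.rels.Lpow γ _ h.Lγ, ← pow_add, pow_eq_of_dvd h.rels.prim _ (N - d + 1) (by omega)]

lemma Pair.TEγ (h : Pair N p E F L T d τ α γ) :
    T • (E ^ (N - d) • γ) = (-τ) • (E ^ (N - d) • γ) := by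
  have h1 := h.dlt
  have h2 := h.dodd
  have h3 := h.rels.even
  rw [h.rels.Tpow γ _ h.Tγ, odd_neg_one (by omega)]; simp

lemma Pair.mem_R (h : Pair N p E F L T d τ α γ) (g : Gen k E F L T) {x : M}
    (hx : x ∈ Rm A N d E α γ) :
    ∃ r s : k[X], x = aeval E r • α + aeval E (s * X ^ (N - d)) • γ := by
  obtain ⟨y, hy, z, hz, rfl⟩ := Submodule.mem_sup.1 hx
  obtain ⟨r, rfl⟩ := h.mem_α g hy
  obtain ⟨a, rfl⟩ := Submodule.mem_span_singleton.1 hz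
  obtain ⟨s, hs⟩ := h.rels.LW g (N - d) (-τ) a
  have h1 := hs (Submodule.span A {E ^ d • α}) (E ^ (N - d) • γ) h.FEγ
    (by rw [h.LEγ, sub_self]; exact Submodule.zero_mem _)
    (by rw [h.TEγ, sub_self]; exact Submodule.zero_mem _)
  obtain ⟨r', hr'⟩ := h.mem_α g (h.Sg_le_α h1)
  refine ⟨r + r', s, ?_⟩
  rw [map_add, add_smul, ← hr', aeval_X_pow_mul]; abel

lemma Pair.diff (h : Pair N p E F L T d τ α γ) {r s r' s' : k[X]}
    (e : aeval E r • α + aeval E s • γ = aeval E r' • α + aeval E s' • γ) :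
    X ^ N ∣ r - r' ∧ X ^ N ∣ s - s' := by
  apply h.indep
  rw [map_sub, map_sub, sub_smul, sub_smul]
  rw [← sub_eq_zero] at e
  rw [← e]; abel

lemma Pair.in_R (h : Pair N p E F L T d τ α γ) (g : Gen k E F L T) (r s : k[X]) :
    aeval E r • α + aeval E s • γ ∈ Rm A N d E α γ ↔ X ^ (N - d) ∣ s := by
  constructor
  · intro hx
    obtain ⟨r', s', e⟩ := h.mem_R g hx
    have := (h.diff e).2
    have h2 : X ^ (N - d) ∣ s - s' * X ^ (N - d) := (pow_dvd_pow _ (by omega)).trans this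
    exact (dvd_sub_left (dvd_mul_left _ _)).1 h2
  · rintro ⟨s', rfl⟩
    rw [mul_comm, aeval_X_pow_mul]
    exact Submodule.add_mem _ (Submodule.mem_sup_left (smem _ _)) (Submodule.mem_sup_right (smem _ _))

lemma Pair.in_Sg (h : Pair N p E F L T d τ α γ) (g : Gen k E F L T) (r s : k[X]) :
    aeval E r • α + aeval E s • γ ∈ Submodule.span A {E ^ d • α} ↔ X ^ d ∣ r ∧ X ^ N ∣ s := by
  constructor
  · intro hx
    obtain ⟨r', e⟩ := h.mem_Sg g hx
    obtain ⟨h1, h2⟩ := h.diff (r' := r' * X ^ d) (s' := 0) (by rw [e]; simp)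
    have h1 : X ^ d ∣ r - r' * X ^ d := (pow_dvd_pow _ h.dlt.le).trans h1
    exact ⟨(dvd_sub_left (dvd_mul_left _ _)).1 h1, by simpa using h2⟩
  · rintro ⟨⟨r', rfl⟩, hs⟩
    rw [h.rels.aeval_zero s hs, zero_smul, add_zero, mul_comm, aeval_X_pow_mul]
    exact smem _ _

lemma Pair.Sg_zero (h : Pair N p E F L T d τ α γ) (r : k[X]) :
    aeval E r • (E ^ d • α) = 0 ↔ X ^ (N - d) ∣ r := by
  have := h.dlt
  rw [← X_pow_dvd_cancel (show N - d + d = N by omega) r, ← aeval_X_pow_mul]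
  constructor
  · intro e
    exact (h.indep (r * X ^ d) 0 (by rw [e]; simp)).1
  · intro hd
    rw [h.rels.aeval_zero _ hd, zero_smul]

lemma Pair.Sg_ne (h : Pair N p E F L T d τ α γ) : E ^ d • α ≠ 0 := by
  intro e
  apply h.ne
  have := h.dlt
  rw [show N - 1 = (N - 1 - d) + d by omega, pow_add, mul_smul, e, smul_zero]

lemma Pair.Sg_of_top (h : Pair N p E F L T d τ α γ) {W : Submodule A M}
    (hW : E ^ (N - 1) • α ∈ W) : Submodule.span A {E ^ d • α} ≤ W := by
  rw [Submodule.span_singleton_le_iff_mem]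
  obtain ⟨C, hC, e⟩ := h.αdown d le_rfl h.dlt
  apply mem_of_csmul hC
  rw [← e]; exact W.smul_mem _ hW

lemma Rels.aeval_top (h : Rels N p E F L T) (r : k[X]) (v : M) :
    aeval E r • (E ^ (N - 1) • v) = r.coeff 0 • (E ^ (N - 1) • v) := by
  have hN := h.pos
  conv_lhs => rw [← Polynomial.divX_mul_X_add r]
  rw [map_add, add_smul, aeval_C, algebraMap_smul, ← pow_one (X : k[X]), aeval_X_pow_mul,
    ← mul_smul (E ^ 1), ← pow_add, show 1 + (N - 1) = N by omega, h.EN, zero_smul, smul_zero, zero_add]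

lemma Pair.Sg_least (h : Pair N p E F L T d τ α γ) (g : Gen k E F L T) {W : Submodule A M} {x : M}
    (hx : x ∈ Submodule.span A {γ}) (hxW : x ∈ W) (hx0 : x ≠ 0) :
    Submodule.span A {E ^ d • α} ≤ W := by
  classical
  apply h.Sg_of_top
  have hN := h.rels.pos
  have hex : ∃ t, E ^ t • x = 0 := ⟨N, by rw [h.rels.EN, zero_smul]⟩
  have hs := Nat.find_spec hex
  have h0 : Nat.find hex ≠ 0 := by
    intro h0
    rw [h0, pow_zero, one_smul] at hs
    exact hx0 hs
  obtain ⟨t, ht⟩ := Nat.exists_eq_succ_of_ne_zero h0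
  have hmin := Nat.find_min hex (m := t) (by omega)
  rw [ht, Nat.succ_eq_add_one, pow_succ', mul_smul] at hs
  have hyW : E ^ t • x ∈ W := W.smul_mem _ hxW
  obtain ⟨r, s, e⟩ := h.mem_P g (Submodule.smul_mem _ (E ^ t) hx)
  rw [e] at hs hmin hyW
  have hE1 : ∀ (r : k[X]) (v : M), E • (aeval E r • v) = aeval E (r * X ^ 1) • v := fun r v => by
    rw [aeval_X_pow_mul, ← Epow_aeval, pow_one]
  rw [smul_add, hE1, hE1] at hs
  obtain ⟨h1, h2⟩ := h.indep _ _ hs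
  rw [X_pow_dvd_cancel (show N - 1 + 1 = N by omega)] at h1 h2
  obtain ⟨r, rfl⟩ := h1
  obtain ⟨s, rfl⟩ := h2
  rw [mul_comm _ r, mul_comm _ s, aeval_X_pow_mul, aeval_X_pow_mul, h.rels.aeval_top,
    h.rels.aeval_top] at hmin hyW
  generalize r.coeff 0 = a at *
  generalize s.coeff 0 = b at *
  have hTα := h.rels.Tpow α _ h.Tα (N - 1)
  have hTγ := h.rels.Tpow γ _ h.Tγ (N - 1)
  rw [odd_neg_one h.N1odd] at hTα hTγ
  by_cases ha : a = 0
  · subst ha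
    rw [zero_smul, zero_add] at hmin hyW
    have hb : b ≠ 0 := by rintro rfl; simp at hmin
    have h3 := mem_of_csmul hb hyW
    obtain ⟨C, hC, e⟩ := h.top
    apply mem_of_csmul hC
    rw [← e]; exact W.smul_mem _ h3
  · have h3 := W.add_mem (W.smul_mem T hyW) (csmul_mem τ hyW)
    rw [smul_add, smul_comm T a, smul_comm T b, hTα, hTγ] at h3
    have h4 : a • ((-1 * -τ) • (E ^ (N - 1) • α)) + b • ((-1 * τ) • (E ^ (N - 1) • γ)) +
        τ • (a • (E ^ (N - 1) • α) + b • (E ^ (N - 1) • γ)) = (2 * a * τ) • (E ^ (N - 1) • α) := by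
      generalize E ^ (N - 1) • α = y
      generalize E ^ (N - 1) • γ = z
      match_scalars <;> ring
    rw [h4] at h3
    exact mem_of_csmul (mul_ne_zero (mul_ne_zero h.two ha) h.tau) h3

lemma Pair.Sg_atom (h : Pair N p E F L T d τ α γ) (g : Gen k E F L T) :
    IsAtom (Submodule.span A {E ^ d • α}) := by
  constructor
  · rw [Ne, Submodule.span_singleton_eq_bot]; exact h.Sg_ne
  · intro W hW
    by_contra hne
    obtain ⟨x, hx, hx0⟩ := Submodule.exists_mem_ne_zero_of_ne_bot hne
    exact absurd (h.Sg_least g (h.Sg_le (hW.le hx)) hx hx0) (not_le_of_gt hW)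

lemma Pair.Sg_simple (h : Pair N p E F L T d τ α γ) (g : Gen k E F L T) :
    IsSimpleModule A (Submodule.span A {E ^ d • α}) := isSimpleModule_iff_isAtom.2 (h.Sg_atom g)

lemma Pair.soc (h : Pair N p E F L T d τ α γ) (g : Gen k E F L T) :
    sSup {W : Submodule A M | W ≤ Submodule.span A {γ} ∧ IsSimpleModule A W} =
      Submodule.span A {E ^ d • α} := by
  apply le_antisymm
  · refine sSup_le ?_
    rintro W ⟨hW, hs⟩
    have hat := isSimpleModule_iff_isAtom.1 hs
    obtain ⟨x, hx, hx0⟩ := Submodule.exists_mem_ne_zero_of_ne_bot hat.1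
    have hle := h.Sg_least g (hW hx) hx hx0
    rcases hat.le_iff.1 hle with h1 | h1
    · exact absurd h1 (h.Sg_atom g).1
    · rw [h1]
  · exact le_sSup ⟨h.Sg_le, h.Sg_simple g⟩

lemma Pair.exf (h : Pair N p E F L T d τ α γ) (g : Gen k E F L T) :
    ∃ f : Submodule.span A {γ} →ₗ[A] Submodule.span A {E ^ d • α}, Function.Surjective f ∧
      LinearMap.ker f = (Rm A N d E α γ).comap (Submodule.span A {γ}).subtype := by
  refine lift_aux ((LinearMap.toSpanSingleton A M γ).codRestrict _ (fun a => smem a γ))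
    ((LinearMap.toSpanSingleton A M (E ^ d • α)).codRestrict _ (fun a => smem a _)) ?_ ?_ _ ?_
  · rintro ⟨x, hx⟩
    obtain ⟨a, rfl⟩ := Submodule.mem_span_singleton.1 hx
    exact ⟨a, rfl⟩
  · rintro ⟨x, hx⟩
    obtain ⟨a, rfl⟩ := Submodule.mem_span_singleton.1 hx
    exact ⟨a, rfl⟩
  · intro a
    rw [Submodule.mem_comap, Subtype.ext_iff]
    show a • γ ∈ _ ↔ a • (E ^ d • α) = 0
    obtain ⟨r, hr⟩ := h.rels.LW g d τ a
    have h1 := hr (Rm A N d E α γ) γ (by rw [h.Fγ]; exact Submodule.mem_sup_left (smem _ _))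
      (by rw [h.Lγ, sub_self]; exact Submodule.zero_mem _)
      (by rw [h.Tγ, sub_self]; exact Submodule.zero_mem _)
    have h2 := hr ⊥ (E ^ d • α) (by rw [h.FEd]; exact Submodule.zero_mem _)
      (by rw [h.LEd, sub_self]; exact Submodule.zero_mem _)
      (by rw [h.TEd, sub_self]; exact Submodule.zero_mem _)
    rw [Submodule.mem_bot, sub_eq_zero] at h2
    rw [h2, h.Sg_zero, ← h.in_R g 0 r, map_zero, zero_smul, zero_add]
    constructor
    · intro h3
      have := Submodule.sub_mem _ h3 h1
      simpa using this
    · intro h3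
      have := Submodule.add_mem _ h3 h1
      simpa using this

lemma Pair.exg (h : Pair N p E F L T d τ α γ) (g : Gen k E F L T) 
    {M' : Type} [AddCommGroup M'] [Module k M'] [Module A M'] [IsScalarTower k A M']
    {α' γ' : M'} (h' : Pair N p E F L T (N - d) (-τ) α' γ') :
    ∃ f : Rm A N d E α γ →ₗ[A]
      (Submodule.span A {E ^ (N - d) • α'} × Submodule.span A {E ^ (N - d) • α'}),
      Function.Surjective f ∧
      LinearMap.ker f = (Submodule.span A {E ^ d • α}).comap (Rm A N d E α γ).subtype := by
  have hd := h.dlt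
  let v' := E ^ (N - d) • α'
  let π0 : A × A →ₗ[A] M := (LinearMap.toSpanSingleton A M α).coprod
    (LinearMap.toSpanSingleton A M (E ^ (N - d) • γ))
  let ψ0 : A →ₗ[A] Submodule.span A {v'} :=
    (LinearMap.toSpanSingleton A M' v').codRestrict _ (fun a => smem a _)
  have hψ0 : Function.Surjective ψ0 := by
    rintro ⟨x, hx⟩
    obtain ⟨a, rfl⟩ := Submodule.mem_span_singleton.1 hx
    exact ⟨a, rfl⟩
  have hπ0 : ∀ a, π0 a ∈ Rm A N d E α γ := fun a =>
    Submodule.add_mem _ (Submodule.mem_sup_left (smem _ _)) (Submodule.mem_sup_right (smem _ _))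
  refine lift_aux (π0.codRestrict _ hπ0) (ψ0.prodMap ψ0) ?_ ?_ _ ?_
  · rintro ⟨x, hx⟩
    obtain ⟨y, hy, z, hz, rfl⟩ := Submodule.mem_sup.1 hx
    obtain ⟨a, rfl⟩ := Submodule.mem_span_singleton.1 hy
    obtain ⟨b, rfl⟩ := Submodule.mem_span_singleton.1 hz
    exact ⟨(a, b), rfl⟩
  · exact Function.Surjective.prodMap hψ0 hψ0
  · rintro ⟨a, b⟩
    have hv : ∀ c : A, ψ0 c = 0 ↔ c • v' = 0 := fun c => by rw [Subtype.ext_iff]; rfl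
    rw [Submodule.mem_comap]
    show a • α + b • (E ^ (N - d) • γ) ∈ _ ↔ (ψ0 a, ψ0 b) = 0
    rw [Prod.mk_eq_zero, hv, hv]
    have key : ∀ c : A, ∃ r : k[X], c • α = aeval E r • α ∧
        c • (E ^ (N - d) • γ) - aeval E (r * X ^ (N - d)) • γ ∈ Submodule.span A {E ^ d • α} ∧
        (c • v' = 0 ↔ X ^ d ∣ r) := by
      intro c
      obtain ⟨r, hr⟩ := h.rels.LW g (N - d) (-τ) c
      refine ⟨r, ?_, ?_, ?_⟩
      · have := hr ⊥ α (by rw [h.Fα]; exact Submodule.zero_mem _)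
          (by rw [h.Lα, sub_self]; exact Submodule.zero_mem _)
          (by rw [h.Tα, sub_self]; exact Submodule.zero_mem _)
        rwa [Submodule.mem_bot, sub_eq_zero] at this
      · rw [aeval_X_pow_mul]
        exact hr _ (E ^ (N - d) • γ) h.FEγ
          (by rw [h.LEγ, sub_self]; exact Submodule.zero_mem _)
          (by rw [h.TEγ, sub_self]; exact Submodule.zero_mem _)
      · have := hr ⊥ v' (by rw [h'.FEd]; exact Submodule.zero_mem _)
          (by rw [h'.LEd, sub_self]; exact Submodule.zero_mem _)
          (by rw [h'.TEd, sub_self]; exact Submodule.zero_mem _)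
        rw [Submodule.mem_bot, sub_eq_zero] at this
        rw [this, h'.Sg_zero, show N - (N - d) = d by omega]
    obtain ⟨r, hr1, -, hr3⟩ := key a
    obtain ⟨s, -, hs2, hs3⟩ := key b
    rw [hr3, hs3, hr1, ← X_pow_dvd_cancel (show d + (N - d) = N by omega) s, ← h.in_Sg g]
    constructor
    · intro h3
      have := Submodule.sub_mem _ h3 hs2
      convert this using 1; abel
    · intro h3
      have := Submodule.add_mem _ h3 hs2
      convert this using 1; abel

/-- The product of the Jacobson radical with a submodule. -/
def jm (A : Type) [Ring A] {M : Type} [AddCommGroup M] [Module A M] (B : Submodule A M) :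
    Submodule A M :=
  Submodule.span A {x | ∃ a ∈ Ring.jacobson A, ∃ b ∈ B, x = a • b}

lemma jac_simple {W : Type} [AddCommGroup W] [Module A W] [IsSimpleModule A W] (a : A)
    (ha : a ∈ Ring.jacobson A) (w : W) : a • w = 0 :=
  Module.mem_annihilator.1 (IsSemisimpleModule.jacobson_le_annihilator A W ha) w

lemma mem_jm {B : Submodule A M} {a : A} (ha : a ∈ Ring.jacobson A) {b : M} (hb : b ∈ B) :
    a • b ∈ jm A B := Submodule.subset_span ⟨a, ha, b, hb, rfl⟩

lemma Pair.jP [CharZero k] (h : Pair N p E F L T d τ α γ) (g : Gen k E F L T) (hFN : F ^ N = 0) :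
    jm A (Submodule.span A {γ}) = Rm A N d E α γ := by
  obtain ⟨jE, jF⟩ := h.rels.mem_jac g hFN
  apply le_antisymm
  · obtain ⟨f, -, hf⟩ := h.exf g
    refine Submodule.span_le.2 ?_
    rintro x ⟨a, ha, b, hb, rfl⟩
    have := h.Sg_simple g
    have h1 : f (a • ⟨b, hb⟩) = 0 := by rw [map_smul]; exact jac_simple a ha _
    rw [← LinearMap.mem_ker, hf] at h1
    exact h1
  · have hS : Submodule.span A {E ^ d • α} ≤ jm A (Submodule.span A {γ}) :=
      h.Sg_of_top (mem_jm jE h.α_mem)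
    unfold Rm
    rw [sup_le_iff, Submodule.span_singleton_le_iff_mem, Submodule.span_singleton_le_iff_mem]
    constructor
    · obtain ⟨C, hC, u, e⟩ := h.low
      have h1 := mem_jm jF (smem (E ^ (N - 1 - d)) γ)
      rw [e] at h1
      have h2 := Submodule.sub_mem _ h1 (hS (smem (aeval E u) _))
      rw [add_sub_cancel_right] at h2
      exact mem_of_csmul hC h2
    · have hd := h.dpos
      have hd2 := h.dlt
      obtain ⟨C, hC, e⟩ := h.top_aux (d - 1) (by omega)
      rw [show N - 1 - (d - 1) = N - d by omega] at e
      apply mem_of_csmul hC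
      rw [← e]
      exact Submodule.smul_mem _ _ (mem_jm jE (Submodule.mem_span_singleton_self _))

lemma Pair.jR [CharZero k] (h : Pair N p E F L T d τ α γ) (g : Gen k E F L T) (hFN : F ^ N = 0)
    {M' : Type} [AddCommGroup M'] [Module k M'] [Module A M'] [IsScalarTower k A M']
    {α' γ' : M'} (h' : Pair N p E F L T (N - d) (-τ) α' γ') :
    jm A (Rm A N d E α γ) = Submodule.span A {E ^ d • α} := by
  obtain ⟨jE, jF⟩ := h.rels.mem_jac g hFN
  apply le_antisymm
  · obtain ⟨f, -, hf⟩ := h.exg g h'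
    refine Submodule.span_le.2 ?_
    rintro x ⟨a, ha, b, hb, rfl⟩
    have := h'.Sg_simple g
    have h1 : f (a • ⟨b, hb⟩) = 0 := by
      rw [map_smul]
      exact Prod.ext (jac_simple a ha _) (jac_simple a ha _)
    rw [← LinearMap.mem_ker, hf] at h1
    exact h1
  · exact h.Sg_of_top (mem_jm jE (Submodule.mem_sup_left (Submodule.mem_span_singleton_self _)))

/-- The abstract form of the theorem. -/
theorem Pair.main [CharZero k] (h : Pair N p E F L T d τ α γ) (g : Gen k E F L T) (hFN : F ^ N = 0)
    {M' : Type} [AddCommGroup M'] [Module k M'] [Module A M'] [IsScalarTower k A M']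
    {α' γ' : M'} (h' : Pair N p E F L T (N - d) (-τ) α' γ')
    (P S J JJ : Submodule A M) (S' : Submodule A M') (hP : P = Submodule.span A {γ})
    (hS : S = sSup {W : Submodule A M | W ≤ Submodule.span A {γ} ∧ IsSimpleModule A W})
    (hS' : S' = sSup {W : Submodule A M' | W ≤ Submodule.span A {γ'} ∧ IsSimpleModule A W})
    (hJ : J = jm A P) (hJJ : JJ = jm A J) :
    (∃ f : P →ₗ[A] S, Function.Surjective f ∧ LinearMap.ker f = J.comap P.subtype) ∧
    (∃ f : J →ₗ[A] (S' × S'), Function.Surjective f ∧ LinearMap.ker f = JJ.comap J.subtype) ∧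
    JJ = S ∧ Nonempty (JJ ≃ₗ[A] S) := by
  rw [h.soc g] at hS
  rw [h'.soc g] at hS'
  subst hP
  rw [h.jP g hFN] at hJ
  subst hJ
  rw [h.jR g hFN h'] at hJJ
  subst hS hS' hJJ
  exact ⟨h.exf g, h.exg g h', rfl, ⟨LinearEquiv.refl _ _⟩⟩

end module
end QFLx

namespace QFLx
set_option linter.unusedSectionVars false
set_option linter.unusedSimpArgs false
open Polynomial

section rep
variable {k : Type} [Field k]

/-- Shift operator. -/
def sh (N : ℕ) : (ℕ → k) →ₗ[k] (ℕ → k) where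
  toFun h s := if 0 < s ∧ s < N then h (s - 1) else 0
  map_add' x y := by ext s; simp only [Pi.add_apply]; split_ifs <;> simp
  map_smul' c x := by ext s; simp only [Pi.smul_apply]; split_ifs <;> simp

/-- Weighted lowering operator. -/
def dn (N : ℕ) (c : ℕ → k) : (ℕ → k) →ₗ[k] (ℕ → k) where
  toFun h t := if t + 1 < N then c (t + 1) * h (t + 1) else 0
  map_add' x y := by ext s; simp only [Pi.add_apply]; split_ifs <;> simp [mul_add]
  map_smul' c x := by ext s; simp only [Pi.smul_apply]; split_ifs <;> simp [mul_left_comm]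

/-- Diagonal operator. -/
def dg (N : ℕ) (c : ℕ → k) : (ℕ → k) →ₗ[k] (ℕ → k) where
  toFun h t := if t < N then c t * h t else h t
  map_add' x y := by ext s; simp only [Pi.add_apply]; split_ifs <;> simp [mul_add]
  map_smul' c x := by ext s; simp only [Pi.smul_apply]; split_ifs <;> simp [mul_left_comm]

/-- The crossing operator from the `γ` part to the `α` part. -/
def cr (N d : ℕ) (p : k) : (ℕ → k) →ₗ[k] (ℕ → k) where
  toFun h t := if d - 1 ≤ t ∧ t < N then p ^ (t - (d - 1)) * h (t - (d - 1)) else 0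
  map_add' x y := by ext s; simp only [Pi.add_apply]; split_ifs <;> simp [mul_add]
  map_smul' c x := by ext s; simp only [Pi.smul_apply]; split_ifs <;> simp [mul_left_comm]

lemma sh_apply (N : ℕ) (h : ℕ → k) (s : ℕ) :
    sh N h s = if 0 < s ∧ s < N then h (s - 1) else 0 := rfl
lemma dn_apply (N : ℕ) (c h : ℕ → k) (t : ℕ) :
    dn N c h t = if t + 1 < N then c (t + 1) * h (t + 1) else 0 := rfl
lemma dg_apply (N : ℕ) (c h : ℕ → k) (t : ℕ) :
    dg N c h t = if t < N then c t * h t else h t := rfl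
lemma cr_apply (N d : ℕ) (p : k) (h : ℕ → k) (t : ℕ) :
    cr N d p h t = if d - 1 ≤ t ∧ t < N then p ^ (t - (d - 1)) * h (t - (d - 1)) else 0 := rfl

/-- The representation space. -/
abbrev VV (k : Type) := (ℕ → k) × (ℕ → k)

def rE (N : ℕ) : Module.End k (VV k) := (sh N).prodMap (sh N)

def rF (N d : ℕ) (p : k) : Module.End k (VV k) :=
  ((dn N (cf p (N - d))).coprod (cr N d p)).prod ((dn N (cf p d)).comp (LinearMap.snd k _ _))

def rD (N : ℕ) (a b : ℕ → k) : Module.End k (VV k) := (dg N a).prodMap (dg N b)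

def rL (N d : ℕ) (p : k) : Module.End k (VV k) :=
  rD N (fun s => p ^ (N - d + 1 + 2 * s)) (fun s => p ^ (d + 1 + 2 * s))

def rT (N : ℕ) (τ : k) : Module.End k (VV k) :=
  rD N (fun s => (-1) ^ s * (-τ)) (fun s => (-1) ^ s * τ)

lemma rE_apply (N : ℕ) (x : VV k) : rE N x = (sh N x.1, sh N x.2) := rfl
lemma rF_apply (N d : ℕ) (p : k) (x : VV k) : rF N d p x =
    (dn N (cf p (N - d)) x.1 + cr N d p x.2, dn N (cf p d) x.2) := rfl
lemma rL_apply (N d : ℕ) (p : k) (x : VV k) : rL N d p x =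
    (dg N (fun s => p ^ (N - d + 1 + 2 * s)) x.1, dg N (fun s => p ^ (d + 1 + 2 * s)) x.2) := rfl
lemma rT_apply (N : ℕ) (τ : k) (x : VV k) : rT N τ x =
    (dg N (fun s => (-1) ^ s * (-τ)) x.1, dg N (fun s => (-1) ^ s * τ) x.2) := rfl

lemma dg_mul (N : ℕ) (a b h : ℕ → k) : dg N a (dg N b h) = dg N (fun s => a s * b s) h := by
  ext s; simp only [dg_apply]; split_ifs <;> ring

lemma dg_one (N : ℕ) (a h : ℕ → k) (ha : ∀ s, a s = 1) : dg N a h = h := by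
  ext s; simp [dg_apply, ha]

lemma dg_pow (N : ℕ) (a h : ℕ → k) (m : ℕ) : ((dg N a) ^ m) h = dg N (fun s => a s ^ m) h := by
  induction m with
  | zero => rw [dg_one _ _ _ (by simp)]; simp
  | succ m ih => rw [pow_succ', Module.End.mul_apply, ih, dg_mul]; simp [pow_succ']

lemma dg_sh (N : ℕ) (a h : ℕ → k) (c : k) (ha : ∀ s, a (s + 1) = c * a s) :
    dg N a (sh N h) = c • sh N (dg N a h) := by
  ext s
  simp only [dg_apply, sh_apply, Pi.smul_apply, smul_eq_mul]
  obtain _ | s := s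
  · simp
  · simp only [Nat.add_sub_cancel, ha]
    split_ifs <;> first | omega | ring

lemma dn_dg (N : ℕ) (a b h : ℕ → k) (c : k) (ha : ∀ s, a (s + 1) = c * a s) :
    dn N b (dg N a h) = c • dg N a (dn N b h) := by
  ext s
  simp only [dg_apply, dn_apply, Pi.smul_apply, smul_eq_mul, ha]
  split_ifs <;> first | omega | ring

lemma cr_dg (N d : ℕ) (p : k) (a b h : ℕ → k) (c : k) (hab : ∀ s, b s = c * a (s + (d - 1))) :
    cr N d p (dg N b h) = c • dg N a (cr N d p h) := by
  ext s
  simp only [dg_apply, cr_apply, Pi.smul_apply, smul_eq_mul, hab]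
  by_cases h1 : d - 1 ≤ s ∧ s < N
  · rw [if_pos h1, if_pos h1, if_pos (by omega), if_pos (by omega), Nat.sub_add_cancel h1.1]; ring
  · rw [if_neg h1, if_neg h1]; simp

lemma cr_sh (N d : ℕ) (p : k) (h : ℕ → k) : cr N d p (sh N h) = p • sh N (cr N d p h) := by
  ext s
  simp only [sh_apply, cr_apply, Pi.smul_apply, smul_eq_mul]
  by_cases h1 : d ≤ s ∧ 0 < s ∧ s < N
  · rw [if_pos (by omega), if_pos (by omega), if_pos (by omega), if_pos (by omega),
      show s - (d - 1) = (s - 1 - (d - 1)) + 1 by omega, pow_succ, Nat.add_sub_cancel]; ring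
  · split_ifs <;> first | omega | simp

lemma dn_sh (N : ℕ) (p : k) (hp : IsPrimitiveRoot p N) (hN : 1 < N) (e : ℕ) (h : ℕ → k) :
    dn N (cf p e) (sh N h) = p • sh N (dn N (cf p e) h) + h - dg N (fun s => p ^ (e + 1 + 2 * s)) h := by
  ext s
  simp only [sh_apply, dn_apply, dg_apply, Pi.smul_apply, Pi.add_apply, Pi.sub_apply, smul_eq_mul]
  have key : ∀ s, cf p e (s + 1) = p * cf p e s + (1 - p ^ (e + 1 + 2 * s)) :=
    cf_succ p (hp.ne_one hN) e
  by_cases h1 : s < N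
  · rw [if_pos h1]
    have h3 : p * (if 0 < s ∧ s < N then if s - 1 + 1 < N then cf p e (s - 1 + 1) * h (s - 1 + 1) else 0 else 0)
        = p * cf p e s * h s := by
      obtain _ | s := s
      · simp [cf_zero]
      · rw [if_pos (by omega), if_pos (by omega)]; simp; ring
    have h4 : (if s + 1 < N then cf p e (s + 1) * (if 0 < s + 1 ∧ s + 1 < N then h (s + 1 - 1) else 0) else 0)
        = cf p e (s + 1) * h s := by
      split_ifs
      · simp
      · omega
      · have : s + 1 = N := by omega
        rw [this]; simp [cf, hp.pow_eq_one]
    rw [h3, h4, key]; ring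
  · split_ifs <;> first | omega | simp

/-- `δ` functions. -/
def dl (s : ℕ) : ℕ → k := fun t => if t = s then 1 else 0

lemma sh_dl (N s : ℕ) (hs : s + 1 < N) : sh N (dl s : ℕ → k) = dl (s + 1) := by
  ext t
  simp only [sh_apply, dl]
  split_ifs <;> first | omega | rfl

lemma rE_pow (N s : ℕ) (hs : s < N) (a b : k) :
    ((rE N) ^ s : Module.End k (VV k)) (a • dl 0, b • dl 0) = (a • dl s, b • dl s) := by
  induction s with
  | zero => simp
  | succ s ih =>
    rw [pow_succ', Module.End.mul_apply, ih (by omega)]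
    simp only [rE, LinearMap.prodMap_apply, map_smul]
    rw [sh_dl N s (by omega)]

lemma rE_pow_zero (N m : ℕ) (x : VV k) (s : ℕ) (hs : s < m + 1 ∨ N ≤ s) :
    (((rE N) ^ (m + 1) : Module.End k (VV k)) x).1 s = 0 ∧
    (((rE N) ^ (m + 1) : Module.End k (VV k)) x).2 s = 0 := by
  induction m generalizing s with
  | zero =>
    rw [zero_add, pow_one]
    show sh N x.1 s = 0 ∧ sh N x.2 s = 0
    rw [sh_apply, sh_apply, if_neg (by omega), if_neg (by omega)]
    exact ⟨rfl, rfl⟩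
  | succ m ih =>
    rw [pow_succ', Module.End.mul_apply]
    generalize hy : ((rE N) ^ (m + 1) : Module.End k (VV k)) x = y at *
    show sh N y.1 s = 0 ∧ sh N y.2 s = 0
    rw [sh_apply, sh_apply]
    by_cases h : 0 < s ∧ s < N
    · rw [if_pos h, if_pos h]; exact ih _ (by omega)
    · rw [if_neg h, if_neg h]; exact ⟨rfl, rfl⟩

variable {N : ℕ} {p : k}

lemma rep_rels (hp : IsPrimitiveRoot p N) (hpos : 0 < N) (h4 : 4 ∣ N) (d : ℕ) (hd : d % 2 = 1)
    (hdN : d < N) (τ : k) (hτ : τ * τ = 1) :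
    Rels N p (rE N : Module.End k (VV k)) (rF N d p) (rL N d p) (rT N τ) := by
  have hN : 1 < N := by have := Nat.le_of_dvd hpos h4; omega
  have hpN : ∀ a b : ℕ, a = b + N → p ^ a = p ^ b := fun a b h => pow_eq_of_dvd hp a b h
  have hev : ∀ m : ℕ, m % 2 = 0 → (p ^ m) ^ (N / 2) = 1 := by
    intro m hm
    rw [← pow_mul, (hp.pow_eq_one_iff_dvd _)]
    refine ⟨m / 2, ?_⟩
    obtain ⟨c, hc⟩ := h4
    obtain ⟨m', rfl⟩ : ∃ m', m = 2 * m' := ⟨m / 2, by omega⟩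
    rw [hc, show 4 * c = 2 * (2 * c) by ring, Nat.mul_div_cancel_left _ (by norm_num),
      Nat.mul_div_cancel_left _ (by norm_num)]; ring
  refine ⟨hp, hpos, h4, ?_, ?_, ?_, ?_, ?_, ?_, ?_, ?_, ?_⟩
  · have : ∀ (a b : ℕ → k) (m : ℕ) (x : VV k), ((rD N a b) ^ m) x = ((dg N a ^ m) x.1, (dg N b ^ m) x.2) := by
      intro a b m
      induction m with
      | zero => intro x; simp
      | succ m ih => intro x; rw [pow_succ', Module.End.mul_apply, ih, pow_succ', pow_succ']; rfl
    refine LinearMap.ext fun x => ?_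
    rw [rL, this, dg_pow, dg_pow, dg_one, dg_one]
    · rfl
    · intro s; exact hev _ (by omega)
    · intro s; exact hev _ (by omega)
  · refine LinearMap.ext fun x => ?_
    show (dg N _ (dg N _ x.1), dg N _ (dg N _ x.2)) = _
    have hs : ∀ s : ℕ, ((-1 : k) ^ s) * (-1) ^ s = 1 := fun s => by rw [← mul_pow]; simp
    rw [dg_mul, dg_mul, dg_one, dg_one]
    · rfl
    · intro s; linear_combination (τ * τ) * hs s + hτ
    · intro s; linear_combination (τ * τ) * hs s + hτ
  · refine LinearMap.ext fun x => ?_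
    show (dg N _ (dg N _ x.1), dg N _ (dg N _ x.2)) = (dg N _ (dg N _ x.1), dg N _ (dg N _ x.2))
    simp only [dg_mul, mul_comm]
  · refine LinearMap.ext fun x => ?_
    rw [LinearMap.smul_apply]
    simp only [Module.End.smul_def, Module.End.mul_apply, rE_apply, rF_apply, rL_apply, rT_apply]
    rw [dg_sh _ _ _ (p ^ 2), dg_sh _ _ _ (p ^ 2)]
    · rfl
    · intro s; rw [← pow_add]; congr 1; ring
    · intro s; rw [← pow_add]; congr 1; ring
  · refine LinearMap.ext fun x => ?_
    rw [LinearMap.smul_apply]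
    simp only [Module.End.smul_def, Module.End.mul_apply, rE_apply, rF_apply, rL_apply, rT_apply]
    rw [dn_dg _ _ _ _ (p ^ 2), dn_dg _ _ _ _ (p ^ 2),
      cr_dg N d p (fun s => p ^ (N - d + 1 + 2 * s)) _ _ (p ^ 2), map_add, ← smul_add]
    · rfl
    · intro s
      rw [← pow_add]
      symm
      apply hpN
      omega
    · intro s; rw [← pow_add]; congr 1; ring
    · intro s; rw [← pow_add]; congr 1; ring
  · refine LinearMap.ext fun x => ?_
    rw [LinearMap.neg_apply]
    simp only [Module.End.smul_def, Module.End.mul_apply, rE_apply, rF_apply, rL_apply, rT_apply]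
    rw [dg_sh _ _ _ (-1), dg_sh _ _ _ (-1)]
    · simp
    · intro s; ring
    · intro s; ring
  · refine LinearMap.ext fun x => ?_
    rw [LinearMap.neg_apply]
    simp only [Module.End.smul_def, Module.End.mul_apply, rE_apply, rF_apply, rL_apply, rT_apply]
    rw [dn_dg _ _ _ _ (-1), dn_dg _ _ _ _ (-1),
      cr_dg N d p (fun s => (-1) ^ s * (-τ)) _ _ (-1), map_add]
    · simp [add_comm]
    · intro s
      rw [pow_add, (Nat.even_iff.2 (show (d - 1) % 2 = 0 by omega)).neg_one_pow]; ring
    · intro s; ring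
    · intro s; ring
  · refine LinearMap.ext fun x => ?_
    obtain ⟨m, rfl⟩ : ∃ m, N = m + 1 := ⟨N - 1, by omega⟩
    refine Prod.ext (funext fun s => ?_) (funext fun s => ?_)
    · exact (rE_pow_zero (m + 1) m x s (by omega)).1
    · exact (rE_pow_zero (m + 1) m x s (by omega)).2
  · refine LinearMap.ext fun x => ?_
    rw [LinearMap.sub_apply, LinearMap.add_apply, LinearMap.smul_apply, Module.End.one_apply]
    simp only [Module.End.smul_def, Module.End.mul_apply, rE_apply, rF_apply, rL_apply, rT_apply]
    rw [dn_sh N p hp hN, dn_sh N p hp hN, cr_sh, map_add]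
    refine Prod.ext ?_ ?_
    · simp only [Prod.smul_fst, Prod.fst_add, Prod.fst_sub, smul_add]
      abel
    · simp only [Prod.smul_snd, Prod.snd_add, Prod.snd_sub]

lemma rep_pair [CharZero k] (hp : IsPrimitiveRoot p N) (hpos : 0 < N) (h4 : 4 ∣ N) (d : ℕ)
    (hd : d % 2 = 1) (hdN : d < N) (τ : k) (hτ : τ * τ = 1) :
    Pair N p (rE N : Module.End k (VV k)) (rF N d p) (rL N d p) (rT N τ) d τ
      (((1 : k) • dl 0, (0 : k) • dl 0) : VV k) (((0 : k) • dl 0, (1 : k) • dl 0) : VV k) := by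
  have hN : 1 < N := by have := Nat.le_of_dvd hpos h4; omega
  have e1 : ∀ c, dn N c (dl 0 : ℕ → k) = 0 := by
    intro c; ext t; simp [dn_apply, dl]
  have e2 : ∀ c, dg N c (dl 0 : ℕ → k) = c 0 • dl 0 := by
    intro c; ext t; simp only [dg_apply, dl, Pi.smul_apply, smul_eq_mul]
    split_ifs with h1 h2 <;> first | omega | simp [*]
  have e3 : cr N d p (dl 0 : ℕ → k) = dl (d - 1) := by
    ext t
    simp only [cr_apply, dl]
    by_cases h : t = d - 1
    · subst h; rw [if_pos (by omega)]; simp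
    · by_cases h2 : d - 1 ≤ t ∧ t < N
      · rw [if_pos h2, if_neg (by omega), if_neg h]; simp
      · rw [if_neg h2, if_neg h]
  refine ⟨rep_rels hp hpos h4 d hd hdN τ hτ, by omega, hdN, hd, ?_, two_ne_zero, ?_, ?_, ?_, ?_, ?_, ?_, ?_⟩
  · rintro rfl; simp at hτ
  · simp only [Module.End.smul_def, Module.End.mul_apply, rE_apply, rF_apply, rL_apply, rT_apply]
    simp [e1]
  · simp only [Module.End.smul_def, Module.End.mul_apply, rE_apply, rF_apply, rL_apply, rT_apply]
    simp [e2]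
  · simp only [Module.End.smul_def, Module.End.mul_apply, rE_apply, rF_apply, rL_apply, rT_apply]
    simp [e2]
  · rw [Module.End.smul_def, Module.End.smul_def, rE_pow N (d - 1) (by omega)]
    simp only [Module.End.smul_def, Module.End.mul_apply, rE_apply, rF_apply, rL_apply, rT_apply]
    simp [e1, e3]
  · simp only [Module.End.smul_def, Module.End.mul_apply, rE_apply, rF_apply, rL_apply, rT_apply]
    simp [e2]
  · simp only [Module.End.smul_def, Module.End.mul_apply, rE_apply, rF_apply, rL_apply, rT_apply]
    simp [e2]
  · rw [Module.End.smul_def, rE_pow N (N - 1) (by omega)]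
    intro h0
    have := congrFun (congrArg Prod.fst h0) (N - 1)
    simp [dl] at this

lemma rep_FN [CharZero k] (hp : IsPrimitiveRoot p N) (hpos : 0 < N) (h4 : 4 ∣ N) (d : ℕ)
    (hd : d % 2 = 1) (hdN : d < N) (τ : k) (hτ : τ * τ = 1) :
    (rF N d p : Module.End k (VV k)) ^ N = 0 := by
  have h := rep_pair hp hpos h4 d hd hdN τ hτ
  have hc := h.rels.FNcomm
  have hcs : ∀ s (v : VV k), (rF N d p : Module.End k (VV k)) ^ N • ((rE N : Module.End k (VV k)) ^ s • v) =
      (rE N : Module.End k (VV k)) ^ s • ((rF N d p : Module.End k (VV k)) ^ N • v) := by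
    intro s v
    rw [← mul_smul, ← mul_smul]
    congr 1
    exact ((show Commute _ _ from hc).pow_right s)
  have hα : (rF N d p : Module.End k (VV k)) ^ N • (((1 : k) • dl 0, (0 : k) • dl 0) : VV k) = 0 := by
    rw [show N = N - 1 + 1 by omega, pow_succ, mul_smul, show N - 1 + 1 = N by omega, h.Fα, smul_zero]
  have hγ : (rF N d p : Module.End k (VV k)) ^ N • (((0 : k) • dl 0, (1 : k) • dl 0) : VV k) = 0 := by
    have := h.rels.FsE0 _ _ h.Lα h.Fα (d - 1) (N - 1) (by omega)
    rw [← h.Fγ, ← mul_smul, ← pow_succ, show N - 1 + 1 = N by omega] at this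
    exact this
  refine LinearMap.ext fun v => ?_
  let w : VV k := ∑ s ∈ Finset.range N, (v.1 s • ((rE N : Module.End k (VV k)) ^ s • (((1 : k) • dl 0, (0 : k) • dl 0) : VV k)) +
    v.2 s • ((rE N : Module.End k (VV k)) ^ s • (((0 : k) • dl 0, (1 : k) • dl 0) : VV k)))
  have hw : (rF N d p : Module.End k (VV k)) ^ N • w = 0 := by
    rw [Finset.smul_sum]
    refine Finset.sum_eq_zero fun s _ => ?_
    rw [smul_add, smul_comm _ (v.1 s), smul_comm _ (v.2 s), hcs, hcs, hα, hγ]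
    simp
  have hw' : w = ∑ s ∈ Finset.range N, (v.1 s • dl s, v.2 s • dl s) := by
    refine Finset.sum_congr rfl fun s hs => ?_
    rw [Module.End.smul_def, Module.End.smul_def, rE_pow N s (Finset.mem_range.1 hs),
      rE_pow N s (Finset.mem_range.1 hs)]
    simp
  have hws : ∀ s < N, w.1 s = v.1 s ∧ w.2 s = v.2 s := by
    intro s hs
    rw [hw', Prod.fst_sum, Prod.snd_sum, Finset.sum_apply, Finset.sum_apply]
    simp [dl, hs]
  have hFv : (rF N d p : Module.End k (VV k)) (v - w) = 0 := by
    rw [rF_apply]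
    refine Prod.ext (funext fun s => ?_) (funext fun s => ?_)
    · simp only [Pi.add_apply, dn_apply, cr_apply, Prod.fst_sub, Prod.snd_sub, Pi.sub_apply]
      have h1 : (if s + 1 < N then cf p (N - d) (s + 1) * (v.1 (s + 1) - w.1 (s + 1)) else 0) = 0 := by
        split_ifs with hh
        · rw [(hws _ hh).1, sub_self, mul_zero]
        · rfl
      rw [h1]
      split_ifs with hh
      · rw [(hws _ (by omega)).2]; simp
      · simp
    · simp only [dn_apply, Prod.snd_sub, Pi.sub_apply]
      split_ifs with hh
      · rw [(hws _ hh).2, sub_self, mul_zero]; rfl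
      · rfl
  have hFv2 : (rF N d p : Module.End k (VV k)) ^ N • (v - w) = 0 := by
    rw [show N = N - 1 + 1 by omega, pow_succ, mul_smul, show N - 1 + 1 = N by omega,
      Module.End.smul_def (rF N d p), hFv, smul_zero]
  rw [smul_sub, hw, sub_zero] at hFv2
  exact hFv2

end rep
end QFLx

namespace QFLx
set_option linter.unusedSectionVars false
open Polynomial
variable {k : Type} [Field k] {A : Type} [Ring A] [Algebra k A]
variable {N : ℕ} {p : k} {E F L T : A}

/-- The Borel part. -/
def Bm (k : Type) [Field k] {A : Type} [Ring A] [Algebra k A] (E L T : A) : Submodule k A :=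
  Submodule.span k {x | ∃ c d b : ℕ, x = L ^ c * T ^ d * E ^ b}

lemma Bm_mem (c d b : ℕ) : L ^ c * T ^ d * E ^ b ∈ Bm k E L T := Submodule.subset_span ⟨c, d, b, rfl⟩

lemma Bm_stable (X : A) (h : ∀ c d b : ℕ, X * (L ^ c * T ^ d * E ^ b) ∈ Bm k E L T) (y : A)
    (hy : y ∈ Bm k E L T) : X * y ∈ Bm k E L T := by
  have : Bm k E L T ≤ (Bm k E L T).comap (LinearMap.mulLeft k X) := by
    refine Submodule.span_le.2 ?_
    rintro x ⟨c, d, b, rfl⟩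
    exact h c d b
  exact this hy

lemma pow_quasi {X Y : A} {c : k} (h : X * Y = c • (Y * X)) (m : ℕ) :
    X ^ m * Y = c ^ m • (Y * X ^ m) := by
  induction m with
  | zero => simp
  | succ m ih =>
    rw [pow_succ, mul_assoc, h, mul_smul_comm, ← mul_assoc, ih, smul_mul_assoc, smul_smul,
      mul_assoc, pow_succ']

lemma Rels.B_L (h : Rels N p E F L T) (y : A) (hy : y ∈ Bm k E L T) : L * y ∈ Bm k E L T := by
  refine Bm_stable L (fun c d b => ?_) y hy
  rw [← mul_assoc, ← mul_assoc, ← pow_succ']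
  exact Bm_mem _ _ _

lemma Rels.B_T (h : Rels N p E F L T) (y : A) (hy : y ∈ Bm k E L T) : T * y ∈ Bm k E L T := by
  refine Bm_stable T (fun c d b => ?_) y hy
  rw [← mul_assoc, ← mul_assoc, ((show Commute L T from h.LT).symm.pow_right c).eq,
    mul_assoc _ T, ← pow_succ']
  exact Bm_mem _ _ _

lemma Rels.B_E (h : Rels N p E F L T) (y : A) (hy : y ∈ Bm k E L T) : E * y ∈ Bm k E L T := by
  refine Bm_stable E (fun c d b => ?_) y hy
  have hp := h.p0
  have e1 : E * L ^ c = (p ^ 2)⁻¹ ^ c • (L ^ c * E) := by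
    rw [pow_quasi h.LE, smul_smul, inv_pow, inv_mul_cancel₀ (by positivity), one_smul]
  have e2 : E * T ^ d = (-1 : k) ^ d • (T ^ d * E) := by
    have := pow_quasi (c := (-1 : k)) (X := T) (Y := E) (by rw [h.TE]; simp) d
    rw [this, smul_smul, ← mul_pow]; simp
  rw [← mul_assoc, ← mul_assoc, e1, smul_mul_assoc, smul_mul_assoc, mul_assoc _ E, e2,
    mul_smul_comm, smul_mul_assoc, ← mul_assoc, mul_assoc _ E, ← pow_succ']
  exact Submodule.smul_mem _ _ (Submodule.smul_mem _ _ (Bm_mem _ _ _))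

/-- Span of `F^a y`, `a < m`. -/
def Qm (k : Type) [Field k] {A : Type} [Ring A] [Algebra k A] (m : ℕ) (E F L T : A) : Submodule k A :=
  Submodule.span k {x | ∃ a < m, ∃ y ∈ Bm k E L T, x = F ^ a * y}

lemma Qm_mem {m a : ℕ} (ha : a < m) {y : A} (hy : y ∈ Bm k E L T) : F ^ a * y ∈ Qm k m E F L T :=
  Submodule.subset_span ⟨a, ha, y, hy, rfl⟩

lemma Qm_stable {m : ℕ} (X : A)
    (h : ∀ a < m, ∀ y ∈ Bm k E L T, X * (F ^ a * y) ∈ Qm k m E F L T) (y : A)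
    (hy : y ∈ Qm k m E F L T) : X * y ∈ Qm k m E F L T := by
  have : Qm k m E F L T ≤ (Qm k m E F L T).comap (LinearMap.mulLeft k X) := by
    refine Submodule.span_le.2 ?_
    rintro x ⟨a, ha, y, hy, rfl⟩
    exact h a ha y hy
  exact this hy

lemma Rels.LFpow (h : Rels N p E F L T) (a : ℕ) : L * F ^ a = (p ^ 2)⁻¹ ^ a • (F ^ a * L) := by
  have hp := h.p0
  rw [pow_quasi h.FL, smul_smul, inv_pow, inv_mul_cancel₀ (by positivity), one_smul]

lemma Rels.TFpow (h : Rels N p E F L T) (a : ℕ) : T * F ^ a = (-1 : k) ^ a • (F ^ a * T) := by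
  have := pow_quasi (c := (-1 : k)) (X := F) (Y := T) (by rw [h.TF]; simp) a
  rw [this, smul_smul, ← mul_pow]; simp

lemma Rels.Q_L (h : Rels N p E F L T) (m : ℕ) (y : A) (hy : y ∈ Qm k m E F L T) :
    L * y ∈ Qm k m E F L T := by
  refine Qm_stable L (fun a ha y hy => ?_) y hy
  rw [← mul_assoc, h.LFpow, smul_mul_assoc, mul_assoc]
  exact Submodule.smul_mem _ _ (Qm_mem ha (h.B_L y hy))

lemma Rels.Q_T (h : Rels N p E F L T) (m : ℕ) (y : A) (hy : y ∈ Qm k m E F L T) :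
    T * y ∈ Qm k m E F L T := by
  refine Qm_stable T (fun a ha y hy => ?_) y hy
  rw [← mul_assoc, h.TFpow, smul_mul_assoc, mul_assoc]
  exact Submodule.smul_mem _ _ (Qm_mem ha (h.B_T y hy))

lemma Rels.EFpow (h : Rels N p E F L T) (r : ℕ) : ∃ x y : k,
    E * F ^ (r + 1) = F ^ r * ((p ^ (r + 1))⁻¹ • (F * E - (x • (1 : A) - y • L))) := by
  obtain ⟨x, y, -, -, e⟩ := h.FrEcomm r
  have hp := h.p0
  refine ⟨x, y, ?_⟩
  rw [mul_smul_comm, mul_sub, ← mul_assoc, ← pow_succ, e, add_sub_cancel_right, smul_smul,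
    inv_mul_cancel₀ (by positivity), one_smul]

lemma Rels.Q_E (h : Rels N p E F L T) (m : ℕ) (y : A) (hy : y ∈ Qm k m E F L T) :
    E * y ∈ Qm k m E F L T := by
  refine Qm_stable E (fun a ha y hy => ?_) y hy
  obtain _ | r := a
  · have := Qm_mem (F := F) ha (h.B_E y hy)
    simpa using this
  · obtain ⟨x, z, e⟩ := h.EFpow r
    rw [← mul_assoc, e, mul_assoc, smul_mul_assoc, mul_smul_comm, sub_mul, mul_sub, mul_assoc F,
      ← mul_assoc _ F, ← pow_succ]
    refine Submodule.smul_mem _ _ (Submodule.sub_mem _ (Qm_mem ha (h.B_E y hy)) (Qm_mem (by omega) ?_))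
    rw [sub_mul, smul_mul_assoc, smul_mul_assoc, one_mul]
    exact Submodule.sub_mem _ (Submodule.smul_mem _ _ hy) (Submodule.smul_mem _ _ (h.B_L y hy))

lemma Rels.Q_top (h : Rels N p E F L T) (g : Gen k E F L T) (hFN : F ^ N = 0) :
    Qm k N E F L T = ⊤ := by
  let S : Subalgebra k A :=
    { carrier := {a | ∀ x ∈ Qm k N E F L T, a * x ∈ Qm k N E F L T}
      mul_mem' := by
        intro a b ha hb x hx
        rw [mul_assoc]; exact ha _ (hb _ hx)
      add_mem' := by
        intro a b ha hb x hx
        rw [add_mul]; exact Submodule.add_mem _ (ha _ hx) (hb _ hx)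
      algebraMap_mem' := by
        intro c x hx
        rw [← Algebra.smul_def]; exact Submodule.smul_mem _ _ hx }
  have hS : S = ⊤ := g S (h.Q_E N) (fun x hx => by
      refine Qm_stable F (fun a ha y hy => ?_) x hx
      rw [← mul_assoc, ← pow_succ']
      by_cases h1 : a + 1 < N
      · exact Qm_mem h1 hy
      · rw [show a + 1 = N by omega, hFN, zero_mul]; exact Submodule.zero_mem _) (h.Q_L N) (h.Q_T N)
  rw [eq_top_iff]
  intro a _
  have ha : a ∈ S := hS ▸ Algebra.mem_top
  have h1 : (1 : A) ∈ Qm k N E F L T := by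
    have := Qm_mem (k := k) (F := F) h.pos (Bm_mem (k := k) (E := E) (L := L) (T := T) 0 0 0)
    simpa using this
  simpa using ha 1 h1

/-- Every `F z` is `F x` with `x` in the smaller span. -/
lemma Rels.exist (h : Rels N p E F L T) (g : Gen k E F L T) (hFN : F ^ N = 0) (z : A) :
    ∃ x ∈ Qm k (N - 1) E F L T, F * x = F * z := by
  have hz : z ∈ Qm k N E F L T := by rw [h.Q_top g hFN]; trivial
  have : Qm k N E F L T ≤ (Submodule.map (LinearMap.mulLeft k F) (Qm k (N - 1) E F L T)).comap
      (LinearMap.mulLeft k F) := by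
    refine Submodule.span_le.2 ?_
    rintro x ⟨a, ha, y, hy, rfl⟩
    by_cases h1 : a < N - 1
    · exact ⟨_, Qm_mem h1 hy, rfl⟩
    · refine ⟨0, Submodule.zero_mem _, ?_⟩
      rw [map_zero, LinearMap.mulLeft_apply, ← mul_assoc, ← pow_succ', show a + 1 = N by omega, hFN,
        zero_mul]
  obtain ⟨x, hx, e⟩ := this hz
  exact ⟨x, hx, e⟩

lemma Rels.EF_factor (h : Rels N p E F L T) (m a : ℕ) : ∃ z : A, E ^ m * F ^ (m + a) = F ^ a * z := by
  induction m with
  | zero => exact ⟨1, by simp⟩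
  | succ m ih =>
    obtain ⟨z, hz⟩ := ih
    obtain ⟨x, y, e⟩ := h.EFpow (m + a)
    rw [show m + 1 + a = m + a + 1 by omega, pow_succ, mul_assoc, e, ← mul_assoc, hz, mul_assoc]
    exact ⟨_, rfl⟩

/-- Nonvanishing hypotheses. -/
structure NV (N : ℕ) (p : k) (E F L T : A) : Prop where
  one : ∀ i < N / 2, ∀ σ : k, σ * σ = 1 → F ^ (N - 1) * (pt σ T * pr N p L i) * E ^ (N - 1) ≠ 0
  two : ∀ i, 1 ≤ i → i ≤ N / 2 → ∀ σ : k, σ * σ = 1 →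
    E ^ (N - 1) * (F ^ (N - 1) * (pt σ T * pr N p L i)) ≠ 0

lemma Rels.pr_L (h : Rels N p E F L T) (i : ℕ) (σ : k) (hσ : σ * σ = 1) (hi : i < N / 2) :
    ∃ c : k, pt σ T * pr N p L i * L = c • (pt σ T * pr N p L i) := by
  refine ⟨p ^ (N - 2 * i), ?_⟩
  have e : L * pr N p L i = pr N p L i * L := by
    unfold pr
    rw [Finset.mul_sum, Finset.sum_mul]
    refine Finset.sum_congr rfl fun t _ => ?_
    rw [mul_smul_comm, smul_mul_assoc, ← pow_succ, ← pow_succ']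
  rw [mul_assoc, ← e, h.L_pr' i (N - 2 * i) ⟨1, by omega⟩, mul_smul_comm]

lemma Rels.pr_T (h : Rels N p E F L T) (i : ℕ) (σ : k) (hσ : σ * σ = 1) :
    pt σ T * pr N p L i * T = σ • (pt σ T * pr N p L i) := by
  have e : T * pt σ T = pt σ T * T := by
    unfold pt; rw [mul_add, add_mul, mul_smul_comm, smul_mul_assoc, one_mul, mul_one]
  rw [mul_assoc, ← h.T_pr, ← mul_assoc, ← e, h.T_pt σ hσ, smul_mul_assoc]

lemma Rels.B_proj (h : Rels N p E F L T) (i : ℕ) (σ : k) (hσ : σ * σ = 1) (hi : i < N / 2)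
    (y : A) (hy : y ∈ Bm k E L T) : ∃ r : k[X],
    pt σ T * pr N p L i * y = pt σ T * pr N p L i * aeval E r := by
  obtain ⟨c, hL⟩ := h.pr_L i σ hσ hi
  have hT := h.pr_T i σ hσ
  generalize pt σ T * pr N p L i = e at *
  induction hy using Submodule.span_induction with
  | mem x hx =>
    obtain ⟨a, b, s, rfl⟩ := hx
    have h1 : ∀ a : ℕ, e * L ^ a = c ^ a • e := by
      intro a
      induction a with
      | zero => simp
      | succ a ih => rw [pow_succ, ← mul_assoc, ih, smul_mul_assoc, hL, smul_smul, pow_succ]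
    have h2 : ∀ a : ℕ, e * T ^ a = σ ^ a • e := by
      intro a
      induction a with
      | zero => simp
      | succ a ih => rw [pow_succ, ← mul_assoc, ih, smul_mul_assoc, hT, smul_smul, pow_succ]
    refine ⟨C (c ^ a * σ ^ b) * X ^ s, ?_⟩
    rw [← mul_assoc, ← mul_assoc, h1, smul_mul_assoc, h2, smul_smul, map_mul, aeval_C, map_pow, aeval_X,
      ← Algebra.smul_def, mul_smul_comm, smul_mul_assoc]
  | zero => exact ⟨0, by simp⟩
  | add x y _ _ hx hy =>
    obtain ⟨r, hr⟩ := hx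
    obtain ⟨s, hs⟩ := hy
    exact ⟨r + s, by rw [mul_add, hr, hs, map_add, mul_add]⟩
  | smul a x _ hx =>
    obtain ⟨r, hr⟩ := hx
    exact ⟨C a * r, by rw [mul_smul_comm, hr, map_mul, aeval_C, ← Algebra.smul_def, mul_smul_comm]⟩

lemma Rels.B_inj [CharZero k] (h : Rels N p E F L T) (nv : NV N p E F L T) (y : A)
    (hy : y ∈ Bm k E L T) (h0 : F ^ (N - 1) * y = 0) : y = 0 := by
  by_contra hne
  obtain ⟨i, hi, σ, hσ, hne⟩ := h.exwt y hne
  rw [smul_eq_mul] at hne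
  obtain ⟨r, hr⟩ := h.B_proj i σ hσ hi y hy
  have h1 : F ^ (N - 1) * (pt σ T * pr N p L i * aeval E r) = 0 := by
    rw [← hr, ← mul_assoc, ← mul_assoc, h.Frpt, mul_assoc _ (F ^ (N - 1)), h.Frpr, ← mul_assoc,
      mul_assoc _ (F ^ (N - 1)), h0, mul_zero]
  rw [hr] at hne
  have hnv := nv.one i hi σ hσ
  generalize pt σ T * pr N p L i = e at *
  have key : ∀ m, m ≤ N → X ^ m ∣ r := by
    intro m
    induction m with
    | zero => intro _; simp
    | succ m ih =>
      intro hm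
      obtain ⟨r', hr'⟩ := ih (by omega)
      have h2 : aeval E r * E ^ (N - 1 - m) = r'.coeff 0 • E ^ (N - 1) := by
        have := h.aeval_top (M := A) r' 1
        rw [smul_eq_mul, smul_eq_mul, mul_one] at this
        rw [← this, hr', mul_comm (X ^ m), map_mul, map_pow, aeval_X, mul_assoc, ← pow_add,
          show m + (N - 1 - m) = N - 1 by omega]
      have h3 : r'.coeff 0 • (F ^ (N - 1) * e * E ^ (N - 1)) = 0 := by
        rw [mul_assoc, ← mul_smul_comm, ← mul_smul_comm, ← h2, ← mul_assoc e, ← mul_assoc, h1, zero_mul]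
      have h4 := (smul_eq_zero.1 h3).resolve_right hnv
      rw [hr', pow_succ]
      exact mul_dvd_mul_left _ (X_dvd_iff.2 h4)
  rw [h.aeval_zero r (key N le_rfl), mul_zero] at hne
  exact hne rfl

lemma Q_form {m : ℕ} (x : A) (hx : x ∈ Qm k m E F L T) : ∃ y : ℕ → A, (∀ a, y a ∈ Bm k E L T) ∧
    x = ∑ a ∈ Finset.range m, F ^ a * y a := by
  classical
  induction hx using Submodule.span_induction with
  | mem x hx =>
    obtain ⟨a, ha, y, hy, rfl⟩ := hx
    refine ⟨fun b => if b = a then y else 0, fun b => ?_, ?_⟩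
    · dsimp only; split_ifs
      · exact hy
      · exact Submodule.zero_mem _
    · simp [ha]
  | zero => exact ⟨0, fun a => Submodule.zero_mem _, by simp⟩
  | add x y _ _ hx hy =>
    obtain ⟨r, hr, e1⟩ := hx
    obtain ⟨s, hs, e2⟩ := hy
    refine ⟨r + s, fun a => Submodule.add_mem _ (hr a) (hs a), ?_⟩
    rw [e1, e2, ← Finset.sum_add_distrib]
    simp [mul_add]
  | smul a x _ hx =>
    obtain ⟨r, hr, e1⟩ := hx
    refine ⟨a • r, fun b => Submodule.smul_mem _ _ (hr b), ?_⟩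
    rw [e1, Finset.smul_sum]
    simp

lemma Rels.uniq [CharZero k] (h : Rels N p E F L T) (hFN : F ^ N = 0) (nv : NV N p E F L T) (x : A)
    (hx : x ∈ Qm k (N - 1) E F L T) (h0 : F * x = 0) : x = 0 := by
  obtain ⟨y, hy, rfl⟩ := Q_form x hx
  have hbig : ∀ m, N ≤ m → F ^ m = 0 := fun m hm => by
    rw [show m = N + (m - N) by omega, pow_add, hFN, zero_mul]
  have key : ∀ a, a < N - 1 → y a = 0 := by
    intro a
    induction a using Nat.strong_induction_on with
    | _ a ih =>
      intro ha
      apply h.B_inj nv _ (hy a)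
      have h1 : F ^ (N - 2 - a) * (F * ∑ a ∈ Finset.range (N - 1), F ^ a * y a) = 0 := by
        rw [h0, mul_zero]
      rw [← mul_assoc, ← pow_succ, Finset.mul_sum,
        Finset.sum_eq_single_of_mem a (Finset.mem_range.2 ha)] at h1
      · rw [← mul_assoc, ← pow_add, show N - 2 - a + 1 + a = N - 1 by omega] at h1
        exact h1
      · intro b hb hba
        rw [Finset.mem_range] at hb
        rcases lt_or_gt_of_ne hba with h2 | h2
        · rw [ih b h2 (by omega)]; simp
        · rw [← mul_assoc, ← pow_add, hbig _ (by omega), zero_mul]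
  refine Finset.sum_eq_zero fun a ha => ?_
  rw [key a (Finset.mem_range.1 ha), mul_zero]

/-- Existence and uniqueness of `γ`. -/
lemma Rels.exun [CharZero k] (h : Rels N p E F L T) (g : Gen k E F L T) (hFN : F ^ N = 0)
    (nv : NV N p E F L T) (i : ℕ) (hi : 1 ≤ i) (hi2 : i ≤ N / 2) (w : A) :
    ∃! x, x ∈ Qm k (N - 1) E F L T ∧ F * x = E ^ (2 * i - 2) * (F ^ (N - 1) * w) := by
  obtain ⟨z, hz⟩ := h.EF_factor (2 * i - 2) (N - 1 - (2 * i - 2))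
  have hev := h.even
  rw [show 2 * i - 2 + (N - 1 - (2 * i - 2)) = N - 1 by omega] at hz
  obtain ⟨x, hx, e⟩ := h.exist g hFN (F ^ (N - 1 - (2 * i - 2) - 1) * z * w)
  have e2 : F * x = E ^ (2 * i - 2) * (F ^ (N - 1) * w) := by
    rw [e, ← mul_assoc (E ^ (2 * i - 2)), hz, ← mul_assoc, ← mul_assoc, ← pow_succ',
      show N - 1 - (2 * i - 2) - 1 + 1 = N - 1 - (2 * i - 2) by omega]
  refine ⟨x, ⟨hx, e2⟩, ?_⟩
  rintro y ⟨hy, hy2⟩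
  rw [← sub_eq_zero]
  apply h.uniq hFN nv _ (Submodule.sub_mem _ hy hx)
  rw [mul_sub, hy2, e2, sub_self]

lemma Rels.pair [CharZero k] (h : Rels N p E F L T) (hFN : F ^ N = 0)
    (nv : NV N p E F L T) (i : ℕ) (hi : 1 ≤ i) (hi2 : i ≤ N / 2) (τ : k) (hτ : τ * τ = 1)
    (c : k) (hc : c ≠ 0) (α γ : A) (hα : α = c • (F ^ (N - 1) * (pt τ T * pr N p L i)))
    (hγ : γ ∈ Qm k (N - 1) E F L T) (hF : F * γ = E ^ (2 * i - 2) * α) :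
    Pair N p E F L T (2 * i - 1) τ α γ := by
  have hev := h.even
  have hpos := h.pos
  have hFα : F * α = 0 := by
    rw [hα, mul_smul_comm, ← mul_assoc, ← pow_succ', show N - 1 + 1 = N by omega, hFN, zero_mul,
      smul_zero]
  have e1 : F ^ (N - 1) * (pt τ T * pr N p L i) = pt (-τ) T * pr N p L (i + (N - 1)) * F ^ (N - 1) := by
    rw [← mul_assoc, h.Frpt, mul_assoc, h.Frpr, odd_neg_one (by omega), neg_one_mul, ← mul_assoc]
  have hLα : L * α = p ^ (N - (2 * i - 1) + 1) • α := by
    rw [hα, e1, mul_smul_comm, ← mul_assoc, ← mul_assoc, h.L_pt, mul_assoc (pt _ _) L,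
      h.L_pr' _ (N - (2 * i - 1) + 1) ⟨3, by omega⟩, mul_smul_comm, smul_mul_assoc, smul_comm]
  have hTα : T * α = (-τ) • α := by
    rw [hα, e1, mul_smul_comm, ← mul_assoc, ← mul_assoc, h.T_pt (-τ) (by simpa using hτ),
      smul_mul_assoc, smul_mul_assoc, smul_comm]
  have hLβ := h.Lpow (M := A) α _ hLα (2 * i - 2)
  have hTβ := h.Tpow (M := A) α _ hTα (2 * i - 2)
  rw [(Nat.even_iff.2 (show (2 * i - 2) % 2 = 0 by omega)).neg_one_pow, one_mul] at hTβ
  simp only [smul_eq_mul] at hLβ hTβ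
  refine ⟨h, by omega, by omega, by omega, ?_, two_ne_zero, hFα, hLα, hTα, ?_, ?_, ?_, ?_⟩
  · rintro rfl; simp at hτ
  · rw [smul_eq_mul, smul_eq_mul, hF, show 2 * i - 1 - 1 = 2 * i - 2 by omega]
  · rw [smul_eq_mul, ← sub_eq_zero]
    apply h.uniq hFN nv _ (Submodule.sub_mem _ (h.Q_L _ _ hγ) (Submodule.smul_mem _ _ hγ))
    rw [mul_sub, ← mul_assoc, h.FL, smul_mul_assoc, mul_assoc, mul_smul_comm, hF, hLβ, smul_smul,
      sub_eq_zero, ← pow_add, ← pow_add,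
      pow_eq_of_dvd h.prim _ (2 * i - 1 + 1) (by omega)]
  · rw [smul_eq_mul, ← sub_eq_zero]
    apply h.uniq hFN nv _ (Submodule.sub_mem _ (h.Q_T _ _ hγ) (Submodule.smul_mem _ _ hγ))
    have hFT : F * T = -(T * F) := by rw [h.TF, neg_neg]
    rw [mul_sub, ← mul_assoc, hFT, neg_mul, mul_assoc, mul_smul_comm, hF, hTβ]
    simp
  · rw [hα, smul_eq_mul, mul_smul_comm]
    exact smul_ne_zero hc (nv.two i hi hi2 τ hτ)

end QFLx

namespace QFLx
set_option linter.unusedSectionVars false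
section
variable {k : Type} [Field k] {A : Type} [Ring A] [Algebra k A]
variable {N : ℕ} {p : k} {E F L T : A}

/-- The relations in terms of the original generators. -/
structure KR (n : ℕ) (q : k) (K H E F : A) : Prop where
  KK : K ^ n = 1
  HH : H ^ n = (K ^ (n - 1)) ^ 2
  KH : K * H = H * K
  KE : K * E = q ^ n • (E * K)
  KF : K * F = (q ^ n)⁻¹ • (F * K)
  HE : H * E = (q ^ n * (q ^ 2)⁻¹) • (E * H)
  HF : H * F = ((q ^ n)⁻¹ * q ^ 2) • (F * H)
  EN : E ^ n ^ 2 = 0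
  FN : F ^ n ^ 2 = 0
  FE : F * E - q⁻¹ • (E * F) = 1 - K ^ (n - 1) * H

variable {n : ℕ} {q : k} {K H : A}

lemma KR.HN (h : KR n q K H E F) : H ^ n ^ 2 = 1 := by
  rw [sq, pow_mul, h.HH, ← pow_mul, ← pow_mul,
    show (n - 1) * (2 * n) = n * ((n - 1) * 2) by ring, pow_mul, h.KK, one_pow]

lemma KR.comm (h : KR n q K H E F) : Commute K H := h.KH

lemma half_pow {q : k} {M : ℕ} (hq : IsPrimitiveRoot q (2 * M)) (hM : 0 < M) : q ^ M = -1 := by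
  have h1 : (q ^ M) ^ 2 = 1 := by rw [← pow_mul, mul_comm, hq.pow_eq_one]
  rcases mul_self_eq_one_iff.1 (by rw [← sq]; exact h1 : q ^ M * q ^ M = 1) with h2 | h2
  · exfalso
    have := Nat.le_of_dvd hM ((hq.pow_eq_one_iff_dvd M).1 h2)
    omega
  · exact h2

lemma KR.rels (h : KR n q K H E F) (hn : 0 < n) (h4 : 4 ∣ n) (hq : IsPrimitiveRoot q (n ^ 2)) :
    Rels (n ^ 2) q⁻¹ E F (K ^ (n - 1) * H) (K * H ^ (n / 2)) := by
  have q0 : q ≠ 0 := hq.ne_zero (by positivity)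
  have hN := hq.pow_eq_one
  obtain ⟨c, rfl⟩ := h4
  have hc : 0 < c := by omega
  have e1 : (4 * c) / 2 = 2 * c := by omega
  have e2 : (4 * c) ^ 2 / 2 = (4 * c) * (2 * c) := by
    rw [show (4 * c) ^ 2 = 2 * ((4 * c) * (2 * c)) by ring, Nat.mul_div_cancel_left _ (by norm_num)]
  have hhalf : q ^ ((4 * c) * (2 * c)) = -1 := by
    apply half_pow _ (by positivity)
    rwa [show 2 * ((4 * c) * (2 * c)) = (4 * c) ^ 2 by ring]
  have hKH := h.comm
  have hNm : (q ^ (4 * c)) ^ (4 * c - 1) * q ^ (4 * c) = 1 := by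
    rw [← pow_succ, Nat.sub_add_cancel (by omega), ← pow_mul, ← sq, hN]
  rw [e1]
  have hLE : ∀ X : A, ∀ a b x : k, K * X = a • (X * K) → H * X = b • (X * H) →
      b * a ^ (4 * c - 1) = x → K ^ (4 * c - 1) * H * X = x • (X * (K ^ (4 * c - 1) * H)) := by
    intro X a b x h1 h2 h3
    rw [mul_assoc, h2, mul_smul_comm, ← mul_assoc, pow_quasi h1, smul_mul_assoc, smul_smul, h3,
      mul_assoc]
  have hTE : ∀ X : A, ∀ a b x : k, K * X = a • (X * K) → H * X = b • (X * H) →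
      b ^ (2 * c) * a = x → K * H ^ (2 * c) * X = x • (X * (K * H ^ (2 * c))) := by
    intro X a b x h1 h2 h3
    rw [mul_assoc, pow_quasi h2, mul_smul_comm, ← mul_assoc, h1, smul_mul_assoc, smul_smul, h3,
      mul_assoc]
  have hq1 : (q ^ (4 * c)) ^ (2 * c) = -1 := by rw [← pow_mul, hhalf]
  have hq2 : (q ^ 2) ^ (2 * c) = q ^ (4 * c) := by rw [← pow_mul]; congr 1; ring
  refine ⟨hq.inv, by positivity, ⟨4 * c ^ 2, by ring⟩, ?_, ?_, ?_, ?_, ?_, ?_, ?_, h.EN, ?_⟩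
  · rw [e2, (hKH.pow_left _).mul_pow, pow_mul H, h.HH, ← pow_mul, ← pow_mul, ← pow_mul, ← pow_add,
      show (4 * c - 1) * (4 * c * (2 * c)) + (4 * c - 1) * (2 * (2 * c)) =
        4 * c * ((4 * c - 1) * (2 * c) + (4 * c - 1)) by ring, pow_mul, h.KK, one_pow]
  · rw [← sq, (hKH.pow_right _).mul_pow, ← pow_mul, show 2 * c * 2 = 4 * c by ring, h.HH,
      ← ((Commute.refl K).pow_right _).mul_pow, ← pow_succ', Nat.sub_add_cancel (by omega), h.KK, one_pow]
  · have : Commute (K ^ (4 * c - 1) * H) (K * H ^ (2 * c)) := by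
      apply Commute.mul_left
      · exact ((Commute.refl K).mul_right (hKH.pow_right _)).pow_left _
      · exact hKH.symm.mul_right ((Commute.refl H).pow_right _)
    exact this
  · refine hLE E _ _ _ h.KE h.HE ?_
    rw [inv_pow]
    calc _ = ((q ^ (4 * c)) ^ (4 * c - 1) * q ^ (4 * c)) * (q ^ 2)⁻¹ := by ring
      _ = _ := by rw [hNm, one_mul]
  · rw [hLE F _ _ (q ^ 2) h.KF h.HF ?_, smul_smul, inv_pow, inv_mul_cancel₀ (by positivity), one_smul]
    rw [inv_pow]
    calc _ = ((q ^ (4 * c)) ^ (4 * c - 1) * q ^ (4 * c))⁻¹ * q ^ 2 := by rw [mul_inv]; ring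
      _ = _ := by rw [hNm, inv_one, one_mul]
  · rw [hTE E _ _ (-1) h.KE h.HE ?_, neg_one_smul]
    rw [mul_pow, hq1, inv_pow, hq2]
    field_simp
  · rw [hTE F _ _ (-1) h.KF h.HF ?_, neg_one_smul]
    rw [mul_pow, inv_pow, hq1, hq2, inv_neg, inv_one]
    field_simp
  · have := h.FE
    rw [sub_eq_iff_eq_add] at this
    rw [this]; abel

lemma KR.K_eq (h : KR n q K H E F) (b : ℕ) (hb : n = 4 * (b + 1)) :
    K = (K * H ^ (n / 2)) * (K ^ (n - 1) * H) ^ (2 * (b + 1) * (2 * b + 1)) := by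
  have hKH := h.comm
  subst hb
  have e1 : 4 * (b + 1) / 2 = 2 * (b + 1) := by omega
  have e2 : 4 * (b + 1) - 1 = 4 * b + 3 := by omega
  have hH := h.HH
  rw [e1, e2] at *
  rw [(hKH.pow_left _).mul_pow, ← pow_mul, ← mul_assoc, mul_assoc K, ← (hKH.pow_pow _ _).eq,
    ← mul_assoc, ← pow_succ', mul_assoc, ← pow_add,
    show 2 * (b + 1) + 2 * (b + 1) * (2 * b + 1) = 4 * (b + 1) * (b + 1) by ring,
    pow_mul H, hH, ← pow_mul, ← pow_mul, ← pow_add,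
    show (4 * b + 3) * (2 * (b + 1) * (2 * b + 1)) + 1 + (4 * b + 3) * (2 * (b + 1)) =
      4 * (b + 1) * ((4 * b + 3) * (b + 1)) + 1 by ring, pow_succ, pow_mul, h.KK, one_pow, one_mul]

lemma KR.H_eq (h : KR n q K H E F) (b : ℕ) (hb : n = 4 * (b + 1)) :
    H = (K * H ^ (n / 2)) * (K ^ (n - 1) * H) ^ (2 * (b + 1) * (2 * b + 1) + 1) := by
  rw [pow_succ, ← mul_assoc, ← h.K_eq b hb, ← mul_assoc, ← pow_succ',
    Nat.sub_add_cancel (by omega), h.KK, one_mul]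

lemma Rels.toKR (h : Rels (n ^ 2) q⁻¹ E F L T) (hFN : F ^ n ^ 2 = 0) (hq : IsPrimitiveRoot q (n ^ 2))
    (b : ℕ) (hb : n = 4 * (b + 1)) :
    KR n q (T * L ^ (2 * (b + 1) * (2 * b + 1))) (T * L ^ (2 * (b + 1) * (2 * b + 1) + 1)) E F ∧
    (T * L ^ (2 * (b + 1) * (2 * b + 1))) ^ (n - 1) * (T * L ^ (2 * (b + 1) * (2 * b + 1) + 1)) = L ∧
    (T * L ^ (2 * (b + 1) * (2 * b + 1))) * (T * L ^ (2 * (b + 1) * (2 * b + 1) + 1)) ^ (n / 2) = T := by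
  have q0 : q ≠ 0 := hq.ne_zero h.pos.ne'
  have hLT : Commute L T := h.LT
  subst hb
  have e1 : 4 * (b + 1) / 2 = 2 * (b + 1) := by omega
  have e2 : 4 * (b + 1) - 1 = 4 * b + 3 := by omega
  have e3 : (4 * (b + 1)) ^ 2 / 2 = 8 * (b + 1) ^ 2 := by
    rw [show (4 * (b + 1)) ^ 2 = 2 * (8 * (b + 1) ^ 2) by ring, Nat.mul_div_cancel_left _ (by norm_num)]
  have hhalf : q ^ (8 * (b + 1) ^ 2) = -1 := by
    apply half_pow _ (by positivity)
    rwa [show 2 * (8 * (b + 1) ^ 2) = (4 * (b + 1)) ^ 2 by ring]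
  have hL := h.LN
  rw [e3] at hL
  have hLm : ∀ x y : ℕ, L ^ (8 * (b + 1) ^ 2 * x + y) = L ^ y := by
    intro x y; rw [pow_add, pow_mul, hL, one_pow, one_mul]
  have hT : ∀ x y : ℕ, T ^ (2 * x + y) = T ^ y := by
    intro x y; rw [pow_add, pow_mul, sq, h.TT, one_pow, one_mul]
  have hTL : ∀ a x : ℕ, (T * L ^ a) ^ x = T ^ x * L ^ (a * x) := by
    intro a x; rw [(hLT.symm.pow_right a).mul_pow, ← pow_mul]
  have hTTL : ∀ a b x y : ℕ, T ^ a * L ^ x * (T ^ b * L ^ y) = T ^ (a + b) * L ^ (x + y) := by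
    intro a b x y
    rw [mul_assoc, ← mul_assoc (L ^ x), (hLT.pow_pow _ _).eq, mul_assoc, ← pow_add, ← mul_assoc,
      ← pow_add]
  have hTTL' : ∀ x y b : ℕ, T * L ^ x * (T ^ b * L ^ y) = T ^ (1 + b) * L ^ (x + y) := by
    intro x y b
    have := hTTL 1 b x y
    rwa [pow_one] at this
  have hTTL2 : ∀ x y b : ℕ, T ^ b * L ^ x * (T * L ^ y) = T ^ (b + 1) * L ^ (x + y) := by
    intro x y b
    have := hTTL b 1 x y
    rwa [pow_one] at this
  have hKL : (T * L ^ (2 * (b + 1) * (2 * b + 1))) ^ (4 * (b + 1) - 1) *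
      (T * L ^ (2 * (b + 1) * (2 * b + 1) + 1)) = L := by
    rw [e2, hTL, hTTL2, show 4 * b + 3 + 1 = 2 * (2 * b + 2) + 0 by ring, hT,
      show 2 * (b + 1) * (2 * b + 1) * (4 * b + 3) + (2 * (b + 1) * (2 * b + 1) + 1) =
        8 * (b + 1) ^ 2 * (2 * b + 1) + 1 by ring, hLm]
    simp
  have hLE : ∀ x, L ^ x * E = (q⁻¹ ^ 2) ^ x • (E * L ^ x) := pow_quasi h.LE
  have hLF1 : L * F = q ^ 2 • (F * L) := by
    rw [h.FL, smul_smul, inv_pow, mul_inv_cancel₀ (by positivity), one_smul]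
  have hLF : ∀ x, L ^ x * F = (q ^ 2) ^ x • (F * L ^ x) := pow_quasi hLF1
  have qm : (q ^ 2) ^ (2 * (b + 1) * (2 * b + 1)) * q ^ (4 * (b + 1)) = -1 := by
    rw [← pow_mul, ← pow_add, ← hhalf]; congr 1; ring
  have qm' : (q ^ 2) ^ (2 * (b + 1) * (2 * b + 1)) = -(q ^ (4 * (b + 1)))⁻¹ := by
    rw [eq_neg_iff_add_eq_zero]; field_simp; rw [qm]; ring
  refine ⟨⟨?_, ?_, ?_, ?_, ?_, ?_, ?_, h.EN, hFN, ?_⟩, hKL, ?_⟩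
  · rw [hTL, show 4 * (b + 1) = 2 * (2 * b + 2) + 0 by ring, hT,
      show 2 * (b + 1) * (2 * b + 1) * (2 * (2 * b + 2) + 0) = 8 * (b + 1) ^ 2 * (2 * b + 1) + 0 by ring,
      hLm]
    simp
  · rw [e2, ← pow_mul, hTL, hTL, show 4 * (b + 1) = 2 * (2 * b + 2) + 0 by ring, hT,
      show (4 * b + 3) * 2 = 2 * (4 * b + 3) + 0 by ring, hT,
      show (2 * (b + 1) * (2 * b + 1) + 1) * (2 * (2 * b + 2) + 0) =
        8 * (b + 1) ^ 2 * (2 * b + 1) + 4 * (b + 1) by ring, hLm,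
      show 2 * (b + 1) * (2 * b + 1) * (2 * (4 * b + 3) + 0) =
        8 * (b + 1) ^ 2 * (4 * b + 1) + 4 * (b + 1) by ring, hLm]
  · have h1 := hTTL 1 1 (2 * (b + 1) * (2 * b + 1)) (2 * (b + 1) * (2 * b + 1) + 1)
    have h2 := hTTL 1 1 (2 * (b + 1) * (2 * b + 1) + 1) (2 * (b + 1) * (2 * b + 1))
    rw [pow_one] at h1 h2
    rw [h1, h2, add_comm (2 * (b + 1) * (2 * b + 1) + 1)]
  · rw [mul_assoc, hLE, mul_smul_comm, ← mul_assoc, h.TE, inv_pow, inv_pow, qm', inv_neg, inv_inv,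
      neg_mul, smul_neg, neg_smul, neg_neg, mul_assoc]
  · rw [mul_assoc, hLF, mul_smul_comm, ← mul_assoc, h.TF, qm',
      neg_mul, smul_neg, neg_smul, neg_neg, mul_assoc]
  · rw [mul_assoc, hLE, mul_smul_comm, ← mul_assoc, h.TE, inv_pow, inv_pow, pow_succ (q ^ 2), qm',
      neg_mul, inv_neg, mul_inv, inv_inv,
      neg_mul, smul_neg, neg_smul, neg_neg, mul_assoc]
  · rw [mul_assoc, hLF, mul_smul_comm, ← mul_assoc, h.TF, pow_succ (q ^ 2), qm',
      neg_mul, neg_mul, smul_neg, neg_smul, neg_neg, mul_assoc]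
  · rw [hKL, h.FE]; abel
  · rw [e1, hTL, hTTL', show 1 + 2 * (b + 1) = 2 * (b + 1) + 1 by ring, hT,
      show 2 * (b + 1) * (2 * b + 1) + (2 * (b + 1) * (2 * b + 1) + 1) * (2 * (b + 1)) =
        8 * (b + 1) ^ 2 * (b + 1) + 0 by ring, hLm]
    simp

/-- The two PBW spans agree. -/
lemma KR.pbw (h : KR n q K H E F) (hn : 0 < n) (h4 : 4 ∣ n) (hq : IsPrimitiveRoot q (n ^ 2)) :
    Submodule.span k {x | ∃ a b c d : ℕ, a ≤ n ^ 2 - 2 ∧ b ≤ n ^ 2 - 1 ∧ c ≤ n - 1 ∧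
      d ≤ n ^ 2 - 1 ∧ x = F ^ a * K ^ c * H ^ d * E ^ b} =
    Qm k (n ^ 2 - 1) E F (K ^ (n - 1) * H) (K * H ^ (n / 2)) := by
  have R := h.rels hn h4 hq
  have hN1 := R.one_lt
  have hKH := h.comm
  apply le_antisymm
  · refine Submodule.span_le.2 ?_
    rintro x ⟨a, b, c, d, ha, hb, hc, hd, rfl⟩
    obtain ⟨s, hs⟩ := h4
    obtain ⟨r, rfl⟩ : ∃ r, s = r + 1 := ⟨s - 1, by omega⟩
    have hK := h.K_eq r hs
    have hH := h.H_eq r hs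
    have hLT : Commute (K ^ (n - 1) * H) (K * H ^ (n / 2)) := R.LT
    rw [mul_assoc, mul_assoc, ← mul_assoc (K ^ c)]
    refine Qm_mem (by omega) ?_
    generalize 2 * (r + 1) * (2 * r + 1) = m at *
    have e : K ^ c * H ^ d = (K ^ (n - 1) * H) ^ (m * c + (m + 1) * d) * (K * H ^ (n / 2)) ^ (c + d) := by
      conv_lhs => rw [hK]
      conv_lhs =>
        enter [2]
        rw [hH]
      generalize K ^ (n - 1) * H = L at *
      generalize K * H ^ (n / 2) = T at *
      rw [← (hLT.pow_left m).eq, ← (hLT.pow_left (m+1)).eq, (hLT.pow_left m).mul_pow,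
        (hLT.pow_left (m+1)).mul_pow, ← pow_mul, ← pow_mul, mul_assoc, ← mul_assoc (T ^ c),
        ← (hLT.pow_pow _ _).eq, mul_assoc, ← mul_assoc, ← pow_add, ← pow_add]
    rw [e]
    exact Bm_mem _ _ _
  · refine Submodule.span_le.2 ?_
    rintro x ⟨a, ha, y, hy, rfl⟩
    have : Bm k E (K ^ (n - 1) * H) (K * H ^ (n / 2)) ≤ (Submodule.span k
      {x | ∃ a b c d : ℕ, a ≤ n ^ 2 - 2 ∧ b ≤ n ^ 2 - 1 ∧ c ≤ n - 1 ∧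
        d ≤ n ^ 2 - 1 ∧ x = F ^ a * K ^ c * H ^ d * E ^ b}).comap (LinearMap.mulLeft k (F ^ a)) := by
      refine Submodule.span_le.2 ?_
      rintro _ ⟨c, d, b, rfl⟩
      rw [SetLike.mem_coe, Submodule.mem_comap, LinearMap.mulLeft_apply]
      have e : (K ^ (n - 1) * H) ^ c * (K * H ^ (n / 2)) ^ d =
          K ^ ((n - 1) * c + d) * H ^ (c + n / 2 * d) := by
        rw [(hKH.pow_left _).mul_pow, (hKH.pow_right _).mul_pow, ← pow_mul, ← pow_mul, mul_assoc,
          ← mul_assoc (H ^ c), ← (hKH.pow_pow _ _).eq, mul_assoc, ← mul_assoc, ← pow_add, ← pow_add]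
      rw [e, pow_eq_pow_mod _ h.KK, pow_eq_pow_mod (M := A) (c + n / 2 * d) h.HN]
      have hNp : 0 < n ^ 2 := by positivity
      by_cases hb : b < n ^ 2
      · refine Submodule.subset_span ⟨a, b, ((n - 1) * c + d) % n, (c + n / 2 * d) % n ^ 2, by omega, by omega,
          Nat.le_sub_one_of_lt (Nat.mod_lt _ hn), Nat.le_sub_one_of_lt (Nat.mod_lt _ hNp), ?_⟩
        simp only [mul_assoc]
      · have : E ^ b = 0 := by
          rw [← Nat.sub_add_cancel (not_lt.1 hb), pow_add, h.EN, mul_zero]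
        rw [this, mul_zero, mul_zero]
        exact Submodule.zero_mem _
    exact this hy

/-- A weight vector is an eigenvector of the projectors. -/
lemma pr_eig {M : Type} [AddCommGroup M] [Module A M] [Module k M] [IsScalarTower k A M]
    [SMulCommClass k A M]
    (hp : IsPrimitiveRoot p N) (i a : ℕ) (v : M) (hv : L • v = p ^ a • v) (hd : N ∣ a + 2 * i) :
    pr N p L i • v = ((N / 2 : ℕ) : k) • v := by
  have h1 : ∀ t, L ^ t • v = (p ^ a) ^ t • v := by
    intro t
    induction t with
    | zero => simp
    | succ t ih => rw [pow_succ', mul_smul, ih, smul_comm, hv, smul_smul, pow_succ]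
  unfold pr
  rw [Finset.sum_smul]
  have : ∀ t ∈ Finset.range (N / 2), (p ^ (2 * i * t) • L ^ t) • v = v := by
    intro t _
    rw [smul_assoc, h1, smul_smul, ← pow_mul, ← pow_add,
      show 2 * i * t + a * t = (a + 2 * i) * t by ring, pow_mul,
      (hp.pow_eq_one_iff_dvd _).2 hd, one_pow, one_smul]
  rw [Finset.sum_congr rfl this, Finset.sum_const, Finset.card_range, Nat.cast_smul_eq_nsmul]

lemma pt_eig {M : Type} [AddCommGroup M] [Module A M] [Module k M] [IsScalarTower k A M]
    [SMulCommClass k A M] (σ : k) (hσ : σ * σ = 1) (v : M) (hv : T • v = σ • v) :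
    pt σ T • v = (2 : k) • v := by
  unfold pt
  rw [add_smul, one_smul, smul_assoc, hv, smul_smul, hσ, one_smul, two_smul]

end
end QFLx

namespace QFLx
set_option linter.unusedSectionVars false
section
variable {k : Type} [Field k] {A : Type} [Ring A] [Algebra k A]
variable {N : ℕ} {p : k} {E F L T : A}
variable {M : Type} [AddCommGroup M] [Module k M] [Module A M] [IsScalarTower k A M]
variable {d : ℕ} {τ : k} {α γ : M}

lemma Pair.nv1 [CharZero k] (h : Pair N p E F L T d τ α γ) (hτ : τ * τ = 1) (i : ℕ)
    (hi : N ∣ d - 1 + 2 * i) : F ^ (N - 1) * (pt (-τ) T * pr N p L i) * E ^ (N - 1) ≠ 0 := by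
  intro h0
  have hd := h.dpos
  have hpos := h.rels.pos
  have hN := h.rels.one_lt
  have hT := h.rels.Tpow γ τ h.Tγ (N - 1)
  rw [odd_neg_one h.N1odd, neg_one_mul] at hT
  have hL := h.rels.Lpow γ _ h.Lγ (N - 1)
  rw [← pow_add] at hL
  have e1 := pr_eig h.rels.prim i _ _ hL (by
    rw [show d + 1 + 2 * (N - 1) + 2 * i = 2 * N + (d - 1 + 2 * i) by omega]
    exact (Nat.dvd_add_right (Dvd.intro_left 2 rfl)).2 hi)
  have e2 := pt_eig (-τ) (by simpa using hτ) _ hT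
  have e3 := congrArg (fun a => a • γ) h0
  simp only [mul_smul, zero_smul] at e3
  rw [e1, smul_comm (pt (-τ) T), e2, smul_comm (F ^ (N - 1)), smul_comm (F ^ (N - 1))] at e3
  have hh : ((N / 2 : ℕ) : k) ≠ 0 := by
    rw [Nat.cast_ne_zero]; omega
  have e4 := (smul_eq_zero.1 e3).resolve_left hh
  exact h.FE_ne ((smul_eq_zero.1 e4).resolve_left two_ne_zero)

lemma Pair.nv2 [CharZero k] (h : Pair N p E F L T d τ α γ) (hτ : τ * τ = 1) (i : ℕ)
    (hi : d + 1 = 2 * i) : E ^ (N - 1) * (F ^ (N - 1) * (pt τ T * pr N p L i)) ≠ 0 := by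
  intro h0
  have hd := h.dpos
  have hpos := h.rels.pos
  have hN := h.rels.one_lt
  have hdN := h.dlt
  have hev := h.rels.even
  have hT := h.rels.Tpow γ τ h.Tγ (N - 1 - d)
  rw [Even.neg_one_pow (Nat.even_iff.2 (by omega)), one_mul] at hT
  have hL := h.rels.Lpow γ _ h.Lγ (N - 1 - d)
  rw [← pow_add] at hL
  have e1 := pr_eig h.rels.prim i _ _ hL (by
    rw [show d + 1 + 2 * (N - 1 - d) + 2 * i = 2 * N by omega]
    exact Dvd.intro_left 2 rfl)
  have e2 := pt_eig τ hτ _ hT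
  have e3 := congrArg (fun a => a • (E ^ (N - 1 - d) • γ)) h0
  simp only [mul_smul, zero_smul] at e3
  rw [e1, smul_comm (pt τ T), e2, smul_comm (F ^ (N - 1)), smul_comm (E ^ (N - 1)),
    smul_comm (F ^ (N - 1)), smul_comm (E ^ (N - 1))] at e3
  have hh : ((N / 2 : ℕ) : k) ≠ 0 := by
    rw [Nat.cast_ne_zero]; omega
  have e4 := (smul_eq_zero.1 e3).resolve_left hh
  exact h.EF_ne ((smul_eq_zero.1 e4).resolve_left two_ne_zero)

end

section
open QFL
variable {k : Type} [Field k] {n : ℕ} {q : k}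

lemma conj_comm {A : Type} [Ring A] [Algebra k A] {X Y : A} {m : ℕ} (hm : 0 < m) (hX : X ^ m = 1)
    {c : k} (h : X * Y * X ^ (m - 1) = c • Y) : X * Y = c • (Y * X) := by
  rw [← smul_mul_assoc, ← h, mul_assoc (X * Y), ← pow_succ, Nat.sub_add_cancel hm, hX, mul_one]

lemma U_KR (k : Type) [Field k] (n : ℕ) (q : k) (hn : 0 < n) :
    KR n q (QFL.K k n q) (QFL.Kh k n q) (QFL.E k n q) (QFL.F k n q) := by
  have r := fun {a b} (h : Rel k n q a b) => RingQuot.mkAlgHom_rel k h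
  have hK : QFL.K k n q ^ n = 1 := by simpa [QFL.K] using r Rel.Kord
  have hH : QFL.Kh k n q ^ n = (QFL.K k n q ^ (n - 1)) ^ 2 := by
    simpa only [QFL.K, QFL.Kh, map_pow] using r Rel.Khord
  have hHN : QFL.Kh k n q ^ n ^ 2 = 1 := by
    rw [sq, pow_mul, hH, ← pow_mul, ← pow_mul,
      show (n - 1) * (2 * n) = n * ((n - 1) * 2) by ring, pow_mul, hK, one_pow]
  have hN : 0 < n ^ 2 := by positivity
  refine ⟨hK, hH, ?_, conj_comm hn hK ?_, conj_comm hn hK ?_, conj_comm hN hHN ?_,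
    conj_comm hN hHN ?_, ?_, ?_, ?_⟩
  · simpa only [QFL.K, QFL.Kh, map_mul] using r Rel.KKh
  · simpa only [QFL.K, QFL.E, map_mul, map_pow, map_smul] using r Rel.KE
  · simpa only [QFL.K, QFL.F, map_mul, map_pow, map_smul] using r Rel.KF
  · simpa only [QFL.Kh, QFL.E, map_mul, map_pow, map_smul] using r Rel.KhE
  · simpa only [QFL.Kh, QFL.F, map_mul, map_pow, map_smul] using r Rel.KhF
  · simpa only [QFL.E, map_pow, map_zero] using r Rel.Enil
  · simpa only [QFL.F, map_pow, map_zero] using r Rel.Fnil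
  · simpa only [QFL.K, QFL.Kh, QFL.E, QFL.F, map_sub, map_one, map_mul, map_pow, map_smul]
      using r Rel.EF

lemma U_gen (h4 : 4 ∣ n) (hn : 0 < n) : Gen k (QFL.E k n q) (QFL.F k n q)
    (QFL.K k n q ^ (n - 1) * QFL.Kh k n q) (QFL.K k n q * QFL.Kh k n q ^ (n / 2)) := by
  intro S hE hF hL hT
  obtain ⟨s, hs⟩ := h4
  obtain ⟨r, rfl⟩ : ∃ r, s = r + 1 := ⟨s - 1, by omega⟩
  have R := U_KR k n q hn
  have hK : QFL.K k n q ∈ S := by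
    rw [R.K_eq r hs]; exact S.mul_mem hT (S.pow_mem hL _)
  have hH : QFL.Kh k n q ∈ S := by
    rw [R.H_eq r hs]; exact S.mul_mem hT (S.pow_mem hL _)
  rw [eq_top_iff]
  rintro x -
  obtain ⟨y, rfl⟩ := RingQuot.mkAlgHom_surjective k (Rel k n q) x
  induction y using FreeAlgebra.induction with
  | grade0 c => rw [AlgHom.commutes]; exact S.algebraMap_mem c
  | grade1 x =>
    fin_cases x
    · exact hK
    · exact hH
    · exact hE
    · exact hF
  | mul a b ha hb => rw [map_mul]; exact S.mul_mem ha hb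
  | add a b ha hb => rw [map_add]; exact S.add_mem ha hb

lemma comm_conj {A : Type} [Ring A] [Algebra k A] {X Y : A} {m : ℕ} (hm : 0 < m) (hX : X ^ m = 1)
    {c : k} (h : X * Y = c • (Y * X)) : X * Y * X ^ (m - 1) = c • Y := by
  rw [h, smul_mul_assoc, mul_assoc, ← pow_succ', Nat.sub_add_cancel hm, hX, mul_one]

/-- The universal property of `u`. -/
lemma U_lift {B : Type} [Ring B] [Algebra k B] {K H E F : B} (h : KR n q K H E F) (hn : 0 < n) :
    ∃ ρ : U k n q →ₐ[k] B, ρ (QFL.K k n q) = K ∧ ρ (QFL.Kh k n q) = H ∧ ρ (QFL.E k n q) = E ∧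
      ρ (QFL.F k n q) = F := by
  have hN : 0 < n ^ 2 := by positivity
  have key : ∀ ⦃x y⦄, Rel k n q x y →
      FreeAlgebra.lift k (![K, H, E, F] : Fin 4 → B) x = FreeAlgebra.lift k ![K, H, E, F] y := by
    intro x y hxy
    induction hxy with
    | Kord => simpa using h.KK
    | Khord => simpa using h.HH
    | KKh => simpa using h.KH
    | KE => simpa using comm_conj hn h.KK h.KE
    | KF => simpa using comm_conj hn h.KK h.KF
    | KhE => simpa using comm_conj hN h.HN h.HE
    | KhF => simpa using comm_conj hN h.HN h.HF
    | Enil => simpa using h.EN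
    | Fnil => simpa using h.FN
    | EF => simpa using h.FE
  refine ⟨RingQuot.liftAlgHom k ⟨FreeAlgebra.lift k (![K, H, E, F] : Fin 4 → B), key⟩, ?_, ?_, ?_, ?_⟩
  · simp [QFL.K]
  · simp [QFL.Kh]
  · simp [QFL.E]
  · simp [QFL.F]

lemma U_rep {B : Type} [Ring B] [Algebra k B] {E F L T : B} (h : Rels (n ^ 2) q⁻¹ E F L T)
    (hFN : F ^ n ^ 2 = 0) (hq : IsPrimitiveRoot q (n ^ 2)) (hn : 0 < n) (h4 : 4 ∣ n) :
    ∃ ρ : U k n q →ₐ[k] B, ρ (QFL.K k n q ^ (n - 1) * QFL.Kh k n q) = L ∧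
      ρ (QFL.K k n q * QFL.Kh k n q ^ (n / 2)) = T ∧ ρ (QFL.E k n q) = E ∧
      ρ (QFL.F k n q) = F := by
  obtain ⟨s, hs⟩ := h4
  obtain ⟨r, rfl⟩ : ∃ r, s = r + 1 := ⟨s - 1, by omega⟩
  obtain ⟨h1, h2, h3⟩ := h.toKR hFN hq r hs
  obtain ⟨ρ, r1, r2, r3, r4⟩ := U_lift h1 hn
  refine ⟨ρ, ?_, ?_, r3, r4⟩
  · rw [map_mul, map_pow, r1, r2, h2]
  · rw [map_mul, map_pow, r1, r2, h3]

lemma map_pr {A B : Type} [Ring A] [Algebra k A] [Ring B] [Algebra k B] (ρ : A →ₐ[k] B) (N : ℕ) (p : k)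
    (L : A) (i : ℕ) : ρ (pr N p L i) = pr N p (ρ L) i := by
  simp [pr]

lemma map_pt {A B : Type} [Ring A] [Algebra k A] [Ring B] [Algebra k B] (ρ : A →ₐ[k] B) (σ : k)
    (T : A) : ρ (pt σ T) = pt σ (ρ T) := by
  simp [pt]

lemma U_NV [CharZero k] (hn : 0 < n) (h4 : 4 ∣ n) (hq : IsPrimitiveRoot q (n ^ 2)) :
    NV (n ^ 2) q⁻¹ (QFL.E k n q) (QFL.F k n q)
      (QFL.K k n q ^ (n - 1) * QFL.Kh k n q) (QFL.K k n q * QFL.Kh k n q ^ (n / 2)) := by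
  have hN : 0 < n ^ 2 := by positivity
  have hN4 : 4 ∣ n ^ 2 := dvd_trans h4 (Dvd.intro_left _ (by rw [sq]))
  have hp := hq.inv
  have hev : n ^ 2 % 2 = 0 := by omega
  constructor
  · intro i hi σ hσ h0
    obtain ⟨d, hd, hdN, hdi⟩ : ∃ d, d % 2 = 1 ∧ d < n ^ 2 ∧ n ^ 2 ∣ d - 1 + 2 * i := by
      by_cases h : i = 0
      · exact ⟨1, rfl, by omega, by simp [h]⟩
      · exact ⟨n ^ 2 - 2 * i + 1, by omega, by omega, ⟨1, by omega⟩⟩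
    have hσ' : (-σ) * (-σ) = 1 := by simpa using hσ
    have hP := rep_pair hp hN hN4 d hd hdN (-σ) hσ'
    obtain ⟨ρ, r1, r2, r3, r4⟩ := U_rep hP.rels (rep_FN hp hN hN4 d hd hdN (-σ) hσ') hq hn h4
    have := hP.nv1 hσ' i hdi
    rw [neg_neg, ← r1, ← r2, ← r3, ← r4, ← map_pr, ← map_pt, ← map_pow, ← map_pow, ← map_mul,
      ← map_mul, ← map_mul, h0, map_zero] at this
    exact this rfl
  · intro i hi1 hi2 σ hσ h0
    have hP := rep_pair hp hN hN4 (2 * i - 1) (by omega) (by omega) σ hσ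
    obtain ⟨ρ, r1, r2, r3, r4⟩ :=
      U_rep hP.rels (rep_FN hp hN hN4 (2 * i - 1) (by omega) (by omega) σ hσ) hq hn h4
    have := hP.nv2 hσ i (by omega)
    rw [← r1, ← r2, ← r3, ← r4, ← map_pr, ← map_pt, ← map_pow, ← map_pow, ← map_mul,
      ← map_mul, ← map_mul, h0, map_zero] at this
    exact this rfl

/-- The sign attached to `j`. -/
def sg (k : Type) [Field k] (j : ℕ) : k := if j = 0 then 1 else -1

lemma sg_mul (j : ℕ) : sg k j * sg k j = 1 := by unfold sg; split_ifs <;> simp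

lemma sg_neg (j : ℕ) (hj : j ≤ 1) : sg k (1 - j) = -sg k j := by
  unfold sg
  obtain rfl | rfl : j = 0 ∨ j = 1 := by omega
  · simp
  · simp

lemma pr_pt_comm {A : Type} [Ring A] [Algebra k A] {L T : A} (h : L * T = T * L) (N : ℕ) (p σ : k)
    (i : ℕ) : pr N p L i * pt σ T = pt σ T * pr N p L i := by
  have h1 : Commute L (pt σ T) := by
    unfold pt
    exact (Commute.one_right L).add_right ((show Commute L T from h).smul_right σ)
  have h2 : Commute (pr N p L i) (pt σ T) := by
    unfold pr
    exact Commute.sum_left _ _ _ fun t _ => (h1.pow_left t).smul_left _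
  exact h2

lemma pt_one {A : Type} [Ring A] [Algebra k A] (X : A) : pt (1 : k) X = 1 + X := by
  simp [pt]

lemma pt_neg {A : Type} [Ring A] [Algebra k A] (X : A) : pt (-1 : k) X = 1 - X := by
  simp [pt, sub_eq_add_neg]

lemma alpha_eq (hn : 0 < n) (h4 : 4 ∣ n) (hq : IsPrimitiveRoot q (n ^ 2)) (i j : ℕ) :
    alpha k n q i j = ((n ^ 2 : k)⁻¹ * 2 * 2⁻¹) • (QFL.F k n q ^ (n ^ 2 - 1) *
      (pt (sg k j) (QFL.K k n q * QFL.Kh k n q ^ (n / 2)) *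
        pr (n ^ 2) q⁻¹ (QFL.K k n q ^ (n - 1) * QFL.Kh k n q) i)) := by
  have R := (U_KR k n q hn).rels hn h4 hq
  have e1 : phi k n q i = ((n ^ 2 : k)⁻¹ * 2) •
      pr (n ^ 2) q⁻¹ (QFL.K k n q ^ (n - 1) * QFL.Kh k n q) i := rfl
  have e2 : oneJ k n q j = (2 : k)⁻¹ • pt (sg k j) (QFL.K k n q * QFL.Kh k n q ^ (n / 2)) := by
    unfold oneJ sg
    split_ifs
    · rw [pt_one]
    · rw [pt_neg]
  unfold alpha eIdem
  rw [e1, e2, smul_mul_smul_comm, pr_pt_comm R.LT, mul_smul_comm]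

lemma gam_pair [CharZero k] (hn : 0 < n) (h4 : 4 ∣ n) (hq : IsPrimitiveRoot q (n ^ 2)) (i j : ℕ)
    (hi : 1 ≤ i) (hi2 : i ≤ n ^ 2 / 2) :
    Pair (n ^ 2) q⁻¹ (QFL.E k n q) (QFL.F k n q)
      (QFL.K k n q ^ (n - 1) * QFL.Kh k n q) (QFL.K k n q * QFL.Kh k n q ^ (n / 2)) (2 * i - 1)
      (sg k j) (alpha k n q i j) (gam k n q i j) := by
  have KK := U_KR k n q hn
  have R := KK.rels hn h4 hq
  have g := U_gen (k := k) (q := q) h4 hn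
  have nv := U_NV (k := k) hn h4 hq
  have hpbw : pbw k n q = _ := KK.pbw hn h4 hq
  have ex : ∃! x, x ∈ pbw k n q ∧ QFL.F k n q * x = beta k n q i j := by
    rw [hpbw]
    exact R.exun g KK.FN nv i hi hi2 (eIdem k n q i j)
  have hg : gam k n q i j = ex.choose := by
    unfold gam
    rw [dif_pos ex]
  have hs := ex.choose_spec.1
  rw [← hg] at hs
  have hn0 : (n : k) ≠ 0 := Nat.cast_ne_zero.2 hn.ne'
  refine R.pair KK.FN nv i hi hi2 (sg k j) (sg_mul j) _ ?_ _ _ (alpha_eq hn h4 hq i j) ?_ hs.2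
  · have : (2 : k) ≠ 0 := two_ne_zero
    positivity
  · rw [← hpbw]; exact hs.1

lemma idealMul_eq (B : Submodule (U k n q) (U k n q)) :
    idealMul k n q (jrad k n q) B = jm (U k n q) B := by
  unfold idealMul jrad jm
  simp only [Ideal.jacobson_bot, smul_eq_mul]

end
end QFLx

open QFL in
/-- The Loewy structure of `P_{2i,j}`: `P/JP ≅ S_{2i,j}`,
`JP/J²P ≅ S_{n²-2i+2,j'} ⊕ S_{n²-2i+2,j'}` and `J²P = Soc(P) ≅ S_{2i,j}`, where `J` is the
Jacobson radical.  The quotient isomorphisms are expressed by surjective `u`-linear maps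
with the appropriate kernels. -/
theorem statement12 (k : Type) [Field k] [IsAlgClosed k] [CharZero k]
    (n : ℕ) (hn : 0 < n) (h4 : 4 ∣ n) (q : k) (hq : IsPrimitiveRoot q (n ^ 2)) :
    ∀ i j : ℕ, 1 ≤ i → i ≤ n ^ 2 / 2 → j ≤ 1 →
      (∃ f : (P k n q i j) →ₗ[U k n q] (S k n q i j),
        Function.Surjective f ∧
        LinearMap.ker f =
          Submodule.comap (P k n q i j).subtype
            (idealMul k n q (jrad k n q) (P k n q i j))) ∧
      (∃ g : (idealMul k n q (jrad k n q) (P k n q i j)) →ₗ[U k n q]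
          ((S k n q (n ^ 2 / 2 - i + 1) (1 - j)) × (S k n q (n ^ 2 / 2 - i + 1) (1 - j))),
        Function.Surjective g ∧
        LinearMap.ker g =
          Submodule.comap (idealMul k n q (jrad k n q) (P k n q i j)).subtype
            (idealMul k n q (jrad k n q)
              (idealMul k n q (jrad k n q) (P k n q i j)))) ∧
      idealMul k n q (jrad k n q) (idealMul k n q (jrad k n q) (P k n q i j)) =
        S k n q i j ∧
      Nonempty ((idealMul k n q (jrad k n q)
          (idealMul k n q (jrad k n q) (P k n q i j))) ≃ₗ[U k n q] (S k n q i j)) := by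
  intro i j hi hi2 hj
  have h1 := QFLx.gam_pair (k := k) hn h4 hq i j hi hi2
  have h2 := QFLx.gam_pair (k := k) hn h4 hq (n ^ 2 / 2 - i + 1) (1 - j) (by omega) (by omega)
  have hev := h1.rels.even
  rw [QFLx.sg_neg j hj, show 2 * (n ^ 2 / 2 - i + 1) - 1 = n ^ 2 - (2 * i - 1) by omega] at h2
  exact h1.main (QFLx.U_gen h4 hn) (QFLx.U_KR k n q hn).FN h2 _ _ _ _ _ rfl rfl rfl
    (QFLx.idealMul_eq _) (QFLx.idealMul_eq _)
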